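/- Let x₀ = (a,a) with 0 < a < 1 be a point on the diagonal of Ω₁, and let 𝟙⊥ := (−1/√2, 1/√2). For small real s ≠ 0 define c(s) := u(x₀ + s·𝟙⊥). Then c is twice differentiable at every small s ≠ 0 and lim_{s→0} c″(s) = −∞. In particular u is not twice differentiable at any point of the open diagonal. -/

import Mathlib

/-!
Centre `W` on the diagonal direction: `V(r, φ) = W(r, π/4 + φ)`.  The exponents `m²` make `V` a
solution of the backward heat equation `V_φφ + r V_r = 0`, it vanishes at `φ = ±π/4`, and summing
the sine series gives `V(1, φ) = √2 cos φ - 1` (`VV_one`).  With `x = (α - s)/√2`,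
`y = (α + s)/√2`, the number `u(x, y)` is the min over `φ`, max over `r` of
`F = r (α cos φ + s sin φ) - V(r, φ)`, and `α = a√2`, `s = 0` at the point `(a, a)`.

*The saddle on the diagonal.*  `V_rr(r, 0)` is, up to a positive factor, the theta constant
`∑ (-1)^k (2k+1) e^{-π(2k+1)²t}`, which is positive by its modular functional equation
(`sinKernel_pos`).  Hence `V(·, 0)` is strictly convex.  Its slope increases from `0` at `r = 0` and
tends to at least `√2` at `r = 1` (`VV_barrier`, comparison with an explicit supersolution), so
`r ↦ rα - V(r, 0)` has a unique, nondegenerate, interior maximum `r₀`.  The maximum principle for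
the backward heat equation turns local minimality at the angle `φ = 0` into global minimality
(`RData.exists_FF_gt`).  By compactness the nearby critical points of `F` are still global saddle
points, so near `(r₀, 0)` the function `u` at the point with gradient coordinates
`Ψ(r, φ) = ∇V` (polar coordinates, frame rotated by `π/4`) is the Legendre transform `r V_r - V`
(`RData.eventually_uu`).

*The second derivative.*  By the envelope theorem `∇u` at `Ψ(r, φ)` is `(r cos φ, r sin φ)`
(`Good.uu_hasFDerivAt`).  Put `G = V_φ/r - V_rφ`.  Then `det dΨ = -G²/r`, and `G` vanishes on
`φ = 0` but is strictly monotone in `φ` near `r₀`.  So off the diagonal `Ψ` is a local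
diffeomorphism and the second derivative of `u` across the diagonal is
`-(2 r G sin φ cos φ + r² V_rr cos² φ) / G²` (`kap`), whose numerator tends to `-r₀² V_rr < 0` while
`G → 0`.  Along the curve where the first
component of `Ψ` equals `α` every small `s ≠ 0` is attained by the second (`RData.exists_param`),
which gives `c'' → -∞`.
-/

open Real Set Topology Filter

/-- `mIdx n = 4(n+1) - 2 = 4n + 2`, the odd-indexed frequencies `2, 6, 10, …`. -/
def mIdx (n : ℕ) : ℕ := 4 * n + 2

/-- `W(r,θ) = (8/π) ∑_{n≥1} r^{mₙ²} sin(mₙ θ) / ((mₙ² − 1) mₙ)` with `mₙ = 4n − 2`. -/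
noncomputable def W (r θ : ℝ) : ℝ :=
  (8 / π) * ∑' n : ℕ,
    r ^ (mIdx n ^ 2) * Real.sin ((mIdx n : ℝ) * θ) / (((mIdx n : ℝ) ^ 2 - 1) * (mIdx n : ℝ))

/-- The minimax formula `u(x,y) = min_{θ∈[0,π/2]} max_{r∈[0,1]} ( r(x cos θ + y sin θ) − W(r,θ) )`.
(The extrema are attained, so `⨅`/`⨆` over the compact index sets agree with min/max.) -/
noncomputable def u (x y : ℝ) : ℝ :=
  ⨅ θ : Icc (0 : ℝ) (π / 2), ⨆ r : Icc (0 : ℝ) 1,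
    ((r : ℝ) * (x * Real.cos (θ : ℝ) + y * Real.sin (θ : ℝ)) - W (r : ℝ) (θ : ℝ))

/-- `u` along the anti-diagonal line through `(a,a)`: `c(s) = u((a,a) + s·𝟙⊥)` with
`𝟙⊥ = (−1/√2, 1/√2)`. -/
noncomputable def cPerp (a s : ℝ) : ℝ :=
  u (a - s / Real.sqrt 2) (a + s / Real.sqrt 2)

namespace AntiDiag

/-! ### Positivity of a theta constant -/

/-- The ratio bound behind both alternating estimates. -/
lemma theta_pair_lt {a b s : ℝ} (ha : 0 < a) (hb : b ≤ 3 * a)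
    (hs : 2 ≤ s * (b ^ 2 - a ^ 2)) :
    b * rexp (-s * b ^ 2) < a * rexp (-s * a ^ 2) := by
  have h1 : rexp (-s * a ^ 2) = rexp (-s * b ^ 2) * rexp (s * (b ^ 2 - a ^ 2)) := by
    rw [← Real.exp_add]; congr 1; ring
  have h2 : (3 : ℝ) ≤ rexp (s * (b ^ 2 - a ^ 2)) := by
    have := Real.add_one_le_exp (s * (b ^ 2 - a ^ 2)); linarith
  have h2' : (3 : ℝ) < rexp (s * (b ^ 2 - a ^ 2)) := by
    have := Real.add_one_lt_exp (x := s * (b ^ 2 - a ^ 2)) (by linarith); linarith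
  rw [h1]
  have h3 := Real.exp_pos (-s * b ^ 2)
  calc b * rexp (-s * b ^ 2) ≤ (3 * a) * rexp (-s * b ^ 2) := by gcongr
    _ < (rexp (s * (b ^ 2 - a ^ 2)) * a) * rexp (-s * b ^ 2) := by
        gcongr
    _ = _ := by ring

lemma sin_odd_pi_half (k : ℕ) : Real.sin ((2 * k + 1 : ℝ) * (π / 2)) = (-1) ^ k := by
  rw [show (2 * k + 1 : ℝ) * (π / 2) = k * π + π / 2 by ring, Real.sin_add_pi_div_two,
    Real.cos_nat_mul_pi]

lemma sin_even_pi_half (k : ℕ) : Real.sin ((2 * k : ℝ) * (π / 2)) = 0 := by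
  rw [show (2 * k : ℝ) * (π / 2) = k * π by ring, Real.sin_nat_mul_pi]

lemma hasSum_alternating {t : ℝ} (ht : 0 < t) :
    HasSum (fun k : ℕ => (-1) ^ k * (2 * ((2 * k + 1 : ℝ) * rexp (-(π * t) * (2 * k + 1) ^ 2))))
      (HurwitzZeta.sinKernel ((1 / 4 : ℝ) : UnitAddCircle) t) := by
  have h := HurwitzZeta.hasSum_nat_sinKernel (1 / 4) ht
  have hinj : Function.Injective (fun k : ℕ => 2 * k + 1) := fun a b hab => by
    simp only at hab; omega
  rw [← hinj.hasSum_iff] at h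
  · refine h.congr_fun fun k => ?_
    have h1 := sin_odd_pi_half k
    simp only [Function.comp]
    push_cast
    rw [show 2 * π * (1 / 4) * (2 * (k : ℝ) + 1) = (2 * k + 1 : ℝ) * (π / 2) by ring, h1,
      show -(π * t) * (2 * (k : ℝ) + 1) ^ 2 = -π * (2 * (k : ℝ) + 1) ^ 2 * t by ring]
    ring
  · intro n hn
    have : ∃ k, n = 2 * k := by
      rcases Nat.even_or_odd' n with ⟨k, hk | hk⟩
      · exact ⟨k, hk⟩
      · exact absurd ⟨k, hk.symm⟩ hn
    obtain ⟨k, rfl⟩ := this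
    have h1 := sin_even_pi_half k
    push_cast
    rw [show 2 * π * (1 / 4) * (2 * (k : ℝ)) = (2 * k : ℝ) * (π / 2) by ring, h1]
    ring

/-- For `t ≥ 1/4` the terms of the alternating series decrease, so the sum is positive. -/
lemma sinKernel_pos_of_ge {t : ℝ} (ht : 1 / 4 ≤ t) :
    0 < HurwitzZeta.sinKernel ((1 / 4 : ℝ) : UnitAddCircle) t := by
  have ht0 : 0 < t := by linarith
  have h := (hasSum_alternating ht0).tendsto_sum_nat
  have hlt : ∀ k : ℕ, 2 * ((2 * ((k + 1 : ℕ) : ℝ) + 1) *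
        rexp (-(π * t) * (2 * ((k + 1 : ℕ) : ℝ) + 1) ^ 2))
      < 2 * ((2 * k + 1 : ℝ) * rexp (-(π * t) * (2 * k + 1) ^ 2)) := by
    intro k
    have hk : (0 : ℝ) ≤ k := Nat.cast_nonneg k
    push_cast
    have := theta_pair_lt (a := 2 * k + 1) (b := 2 * (k + 1) + 1) (s := π * t)
      (by positivity) (by linarith) (by
        have := Real.pi_gt_three
        have h1 : (3 / 4 : ℝ) ≤ π * t := by nlinarith
        have h2 : (8 : ℝ) ≤ (2 * ((k : ℝ) + 1) + 1) ^ 2 - (2 * k + 1) ^ 2 := by nlinarith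
        nlinarith)
    linarith
  have hanti : Antitone (fun k : ℕ => 2 * ((2 * k + 1 : ℝ) * rexp (-(π * t) * (2 * k + 1) ^ 2))) :=
    antitone_nat_of_succ_le fun k => (hlt k).le
  have h2 := hanti.alternating_series_le_tendsto h 1
  have h3 := hlt 0
  simp only [Finset.sum_range_succ, Finset.sum_range_zero, mul_one] at h2
  norm_num at h2 h3
  linarith

/-- For `x ≥ 4` each pair of terms with indices `n` and `-n - 1` has positive sum. -/
lemma oddKernel_pos_of_ge {x : ℝ} (hx : 4 ≤ x) :
    0 < HurwitzZeta.oddKernel ((1 / 4 : ℝ) : UnitAddCircle) x := by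
  have h := (HurwitzZeta.hasSum_int_oddKernel (1 / 4) (x := x) (by linarith)).nat_add_neg_add_one
  have hpos : ∀ n : ℕ, 0 < ((((n : ℕ) : ℤ) : ℝ) + 1 / 4) *
        rexp (-π * ((((n : ℕ) : ℤ) : ℝ) + 1 / 4) ^ 2 * x) +
      (((-((n : ℤ) + 1) : ℤ) : ℝ) + 1 / 4) * rexp (-π * (((-((n : ℤ) + 1) : ℤ) : ℝ) + 1 / 4) ^ 2 * x) := by
    intro n
    have hk : (0 : ℝ) ≤ n := Nat.cast_nonneg n
    have := theta_pair_lt (a := n + 1 / 4) (b := n + 3 / 4) (s := π * x)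
      (by positivity) (by linarith) (by
        have := Real.pi_gt_three
        have h1 : (12 : ℝ) ≤ π * x := by nlinarith
        have h2 : (1 / 2 : ℝ) ≤ ((n : ℝ) + 3 / 4) ^ 2 - (n + 1 / 4) ^ 2 := by nlinarith
        nlinarith)
    push_cast
    rw [show -π * ((n : ℝ) + 1 / 4) ^ 2 * x = -(π * x) * (n + 1 / 4) ^ 2 by ring,
      show -π * (-((n : ℝ) + 1) + 1 / 4) ^ 2 * x = -(π * x) * (n + 3 / 4) ^ 2 by ring]
    linarith
  rw [← h.tsum_eq]
  exact h.summable.tsum_pos (fun n => (hpos n).le) 0 (hpos 0)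

/-- The theta constant `∑ (-1)^k (2k+1) e^{-π (2k+1)² t}` is positive for every `t > 0`: for
`t ≥ 1/4` the alternating series has decreasing terms, and the modular functional equation
exchanges `t` with `1/t`. -/
lemma sinKernel_pos {t : ℝ} (ht : 0 < t) :
    0 < HurwitzZeta.sinKernel ((1 / 4 : ℝ) : UnitAddCircle) t := by
  rcases le_total (1 / 4) t with h | h
  · exact sinKernel_pos_of_ge h
  · have h4 : 4 ≤ 1 / t := by rw [le_div_iff₀ ht]; linarith
    have h1 := HurwitzZeta.oddKernel_functional_equation ((1 / 4 : ℝ) : UnitAddCircle) (1 / t)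
    have h2 := oddKernel_pos_of_ge h4
    rw [h1, one_div_one_div] at h2
    exact pos_of_mul_pos_right h2 (by positivity)

/-! ### Termwise differentiation of the series -/

lemma le_mIdx (k : ℕ) : k + 2 ≤ mIdx k ∧ mIdx k ≤ 4 * (k + 1) := by
  unfold mIdx; omega

lemma le_mIdx_sq (k : ℕ) : k + 4 ≤ mIdx k ^ 2 := by
  unfold mIdx; nlinarith

lemma two_le_mIdx (k : ℕ) : (2 : ℝ) ≤ mIdx k := by
  have := (le_mIdx k).1
  exact_mod_cast (by omega : 2 ≤ mIdx k)

lemma summable_poly_geom (A : ℝ) (p : ℕ) {ρ : ℝ} (h0 : 0 ≤ ρ) (h1 : ρ < 1) :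
    Summable fun k : ℕ => A * ((k : ℝ) + 1) ^ p * ρ ^ k := by
  have h := summable_pow_mul_geometric_of_norm_lt_one (R := ℝ) p
    (r := ρ) (by rwa [Real.norm_of_nonneg h0])
  have h2 : Summable fun k : ℕ => ((k : ℝ) + 1) ^ p * ρ ^ k := by
    rcases h0.eq_or_lt with h0 | h0
    · subst h0
      refine summable_of_ne_finset_zero (s := {0}) fun k hk => ?_
      have : k ≠ 0 := by simpa using hk
      simp [this]
    · have h3 := ((summable_nat_add_iff 1).2 h).mul_left (ρ⁻¹)
      refine h3.congr fun k => ?_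
      push_cast
      field_simp
      ring
  simpa [mul_assoc] using h2.mul_left A

lemma ser_continuousOn {c d : ℕ → ℝ} {e : ℕ → ℕ} {g : ℝ → ℝ} (A : ℝ) (p : ℕ)
    (hc : ∀ k, |c k| ≤ A * ((k : ℝ) + 1) ^ p) (he : ∀ k, k ≤ e k)
    (hg : Continuous g) (hg1 : ∀ x, |g x| ≤ 1) :
    ContinuousOn (fun q : ℝ × ℝ => ∑' k, c k * q.1 ^ (e k) * g ((mIdx k : ℝ) * q.2 + d k))
      {q | |q.1| < 1} := by
  intro q hq
  obtain ⟨ρ, hρ, hρ1⟩ := exists_between (show |q.1| < 1 from hq)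
  have hρ0 : 0 ≤ ρ := (abs_nonneg _).trans hρ.le
  have hopen : IsOpen {q : ℝ × ℝ | |q.1| < ρ} := isOpen_lt (by fun_prop) (by fun_prop)
  refine ContinuousAt.continuousWithinAt ?_
  refine ContinuousOn.continuousAt (s := {q : ℝ × ℝ | |q.1| < ρ}) ?_ (hopen.mem_nhds hρ)
  refine continuousOn_tsum (u := fun k : ℕ => A * ((k : ℝ) + 1) ^ p * ρ ^ k)
    (fun k => by fun_prop) (summable_poly_geom A p hρ0 hρ1) ?_
  intro k x hx
  have hx : |x.1| < ρ := hx
  have hA : 0 ≤ A * ((k : ℝ) + 1) ^ p := (abs_nonneg _).trans (hc k)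
  rw [Real.norm_eq_abs, abs_mul, abs_mul, abs_pow]
  have h1 : |x.1| ^ e k ≤ ρ ^ k :=
    (pow_le_pow_left₀ (abs_nonneg _) hx.le _).trans (pow_le_pow_of_le_one hρ0 hρ1.le (he k))
  calc |c k| * |x.1| ^ e k * |g _| ≤ (A * ((k : ℝ) + 1) ^ p * ρ ^ k) * 1 := by
        gcongr
        · exact hc k
        · exact hg1 _
    _ = _ := by ring

/-- Termwise differentiation of `∑ c_k r^{e_k} sin(m_k φ + d_k)` jointly in `(r, φ)`, `|r| < 1`. -/
lemma ser_hasFDerivAt {c d : ℕ → ℝ} {e : ℕ → ℕ} (A : ℝ)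
    (hc : ∀ k, |c k| ≤ A * ((k : ℝ) + 1)) (he : ∀ k, k + 1 ≤ e k) (he' : ∀ k, e k ≤ mIdx k ^ 2)
    {r φ : ℝ} (hr : |r| < 1) :
    HasFDerivAt (fun q : ℝ × ℝ => ∑' k, c k * q.1 ^ (e k) * Real.sin ((mIdx k : ℝ) * q.2 + d k))
      ((∑' k, (c k * e k) * r ^ (e k - 1) * Real.sin ((mIdx k : ℝ) * φ + d k)) •
          ContinuousLinearMap.fst ℝ ℝ ℝ +
        (∑' k, (c k * mIdx k) * r ^ (e k) * Real.cos ((mIdx k : ℝ) * φ + d k)) •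
          ContinuousLinearMap.snd ℝ ℝ ℝ) (r, φ) := by
  obtain ⟨ρ, hρ, hρ1⟩ := exists_between hr
  have hρ0 : 0 ≤ ρ := (abs_nonneg _).trans hρ.le
  have hA : ∀ k : ℕ, 0 ≤ A * ((k : ℝ) + 1) := fun k => (abs_nonneg _).trans (hc k)
  have hm : ∀ k, (mIdx k : ℝ) ≤ 4 * ((k : ℝ) + 1) := fun k => by exact_mod_cast (le_mIdx k).2
  have hpow1 : ∀ k (x : ℝ), |x| ≤ ρ → |x| ^ (e k - 1) ≤ ρ ^ k := fun k x hx =>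
    (pow_le_pow_left₀ (abs_nonneg _) hx _).trans
      (pow_le_pow_of_le_one hρ0 hρ1.le (by have := he k; omega))
  have hpow2 : ∀ k (x : ℝ), |x| ≤ ρ → |x| ^ (e k) ≤ ρ ^ k := fun k x hx =>
    (pow_le_pow_left₀ (abs_nonneg _) hx _).trans
      (pow_le_pow_of_le_one hρ0 hρ1.le (by have := he k; omega))
  have hek : ∀ k, (e k : ℝ) ≤ (4 * ((k : ℝ) + 1)) ^ 2 := fun k => by
    have : (e k : ℝ) ≤ (mIdx k : ℝ) ^ 2 := by exact_mod_cast he' k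
    exact this.trans (by gcongr; exact hm k)
  have hb1 : ∀ k (x y : ℝ), |x| ≤ ρ →
      ‖(c k * e k) * x ^ (e k - 1) * Real.sin ((mIdx k : ℝ) * y + d k)‖
        ≤ (16 * A) * ((k : ℝ) + 1) ^ 3 * ρ ^ k := fun k x y hx => by
    rw [Real.norm_eq_abs, abs_mul, abs_mul, abs_pow, abs_mul, Nat.abs_cast]
    calc |c k| * (e k : ℝ) * |x| ^ (e k - 1) * |Real.sin _|
        ≤ (A * ((k : ℝ) + 1)) * (4 * ((k : ℝ) + 1)) ^ 2 * ρ ^ k * 1 := by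
          gcongr
          · exact mul_nonneg (mul_nonneg (hA k) (by positivity)) (by positivity)
          · exact mul_nonneg (hA k) (by positivity)
          · exact hA k
          · exact hc k
          · exact hek k
          · exact hpow1 k x hx
          · exact Real.abs_sin_le_one _
      _ = _ := by ring
  have hb2 : ∀ k (x y : ℝ), |x| ≤ ρ →
      ‖(c k * mIdx k) * x ^ (e k) * Real.cos ((mIdx k : ℝ) * y + d k)‖
        ≤ (4 * A) * ((k : ℝ) + 1) ^ 2 * ρ ^ k := fun k x y hx => by
    rw [Real.norm_eq_abs, abs_mul, abs_mul, abs_pow, abs_mul, Nat.abs_cast]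
    calc |c k| * (mIdx k : ℝ) * |x| ^ (e k) * |Real.cos _|
        ≤ (A * ((k : ℝ) + 1)) * (4 * ((k : ℝ) + 1)) * ρ ^ k * 1 := by
          gcongr
          · exact mul_nonneg (mul_nonneg (hA k) (by positivity)) (by positivity)
          · exact mul_nonneg (hA k) (by positivity)
          · exact hA k
          · exact hc k
          · exact hm k
          · exact hpow2 k x hx
          · exact Real.abs_cos_le_one _
      _ = _ := by ring
  have hs1 := summable_poly_geom (16 * A) 3 hρ0 hρ1
  have hs2 := summable_poly_geom (4 * A) 2 hρ0 hρ1
  have hopen : IsOpen {q : ℝ × ℝ | |q.1| < ρ} := isOpen_lt (by fun_prop) (by fun_prop)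
  have hconv : Convex ℝ {q : ℝ × ℝ | |q.1| < ρ} := by
    have : {q : ℝ × ℝ | |q.1| < ρ} = (ContinuousLinearMap.fst ℝ ℝ ℝ) ⁻¹' (Metric.ball 0 ρ) := by
      ext q; simp
    rw [this]
    exact (convex_ball (0 : ℝ) ρ).linear_preimage (ContinuousLinearMap.fst ℝ ℝ ℝ).toLinearMap
  have key := hasFDerivAt_tsum_of_isPreconnected
    (f := fun k (q : ℝ × ℝ) => c k * q.1 ^ (e k) * Real.sin ((mIdx k : ℝ) * q.2 + d k))
    (f' := fun k (q : ℝ × ℝ) =>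
      ((c k * e k) * q.1 ^ (e k - 1) * Real.sin ((mIdx k : ℝ) * q.2 + d k)) •
          ContinuousLinearMap.fst ℝ ℝ ℝ +
        ((c k * mIdx k) * q.1 ^ (e k) * Real.cos ((mIdx k : ℝ) * q.2 + d k)) •
          ContinuousLinearMap.snd ℝ ℝ ℝ)
    (x₀ := ((0 : ℝ), (0 : ℝ))) (x := (r, φ)) (hs1.add hs2) hopen hconv.isPreconnected ?_ ?_ ?_ ?_ ?_
  · refine key.congr_fderiv ?_
    have hS1 : Summable fun k => (c k * e k) * r ^ (e k - 1) * Real.sin ((mIdx k : ℝ) * φ + d k) :=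
      Summable.of_norm_bounded hs1 fun k => hb1 k r φ hρ.le
    have hS2 : Summable fun k => (c k * mIdx k) * r ^ (e k) * Real.cos ((mIdx k : ℝ) * φ + d k) :=
      Summable.of_norm_bounded hs2 fun k => hb2 k r φ hρ.le
    have := (hS1.hasSum.smul_const (ContinuousLinearMap.fst ℝ ℝ ℝ)).add
      (hS2.hasSum.smul_const (ContinuousLinearMap.snd ℝ ℝ ℝ))
    exact this.tsum_eq
  · intro k q hq
    have h1 : HasFDerivAt (fun q : ℝ × ℝ => q.1) (ContinuousLinearMap.fst ℝ ℝ ℝ) q := hasFDerivAt_fst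
    have h2 : HasFDerivAt (fun q : ℝ × ℝ => q.2) (ContinuousLinearMap.snd ℝ ℝ ℝ) q := hasFDerivAt_snd
    have h3 := ((h1.pow (e k)).const_mul (c k)).mul
      (((h2.const_mul (mIdx k : ℝ)).add_const (d k)).sin)
    refine h3.congr_fderiv ?_
    ext <;> simp <;> ring
  · intro k q hq
    refine (norm_add_le _ _).trans ?_
    rw [norm_smul, norm_smul]
    have n1 := ContinuousLinearMap.norm_fst_le (𝕜 := ℝ) (E := ℝ) (F := ℝ)
    have n2 := ContinuousLinearMap.norm_snd_le (𝕜 := ℝ) (E := ℝ) (F := ℝ)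
    have m1 := hb1 k q.1 q.2 (le_of_lt hq)
    have m2 := hb2 k q.1 q.2 (le_of_lt hq)
    have o1 := mul_le_of_le_one_right (norm_nonneg _) n1 (a := (c k * e k) * q.1 ^ (e k - 1) * Real.sin ((mIdx k : ℝ) * q.2 + d k) |> norm)
    have o2 := mul_le_of_le_one_right (norm_nonneg _) n2 (a := (c k * mIdx k) * q.1 ^ (e k) * Real.cos ((mIdx k : ℝ) * q.2 + d k) |> norm)
    linarith
  · simpa using (abs_nonneg r).trans_lt hρ
  · refine summable_zero.congr fun k => ?_
    have : e k ≠ 0 := by have := he k; omega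
    simp [this]
  · exact hρ

/-! ### The function `V` and its derivatives -/

/-- `W` recentred at the diagonal direction: `VV r φ = W r (π/4 + φ)`. -/
noncomputable def VV (r φ : ℝ) : ℝ :=
  ∑' k : ℕ, (8 / π / (((mIdx k : ℝ) ^ 2 - 1) * mIdx k)) * r ^ (mIdx k ^ 2) *
    Real.sin ((mIdx k : ℝ) * φ + mIdx k * (π / 4))

/-- The radial derivative `∂_r V`. -/
noncomputable def PP (r φ : ℝ) : ℝ :=
  ∑' k : ℕ, (8 / π * mIdx k / ((mIdx k : ℝ) ^ 2 - 1)) * r ^ (mIdx k ^ 2 - 1) *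
    Real.sin ((mIdx k : ℝ) * φ + mIdx k * (π / 4))

/-- The angular component `r⁻¹ ∂_φ V` of the gradient in polar coordinates. -/
noncomputable def QQ (r φ : ℝ) : ℝ :=
  ∑' k : ℕ, (8 / π / ((mIdx k : ℝ) ^ 2 - 1)) * r ^ (mIdx k ^ 2 - 1) *
    Real.cos ((mIdx k : ℝ) * φ + mIdx k * (π / 4))

/-- The second radial derivative `∂_r² V`. -/
noncomputable def NN (r φ : ℝ) : ℝ :=
  ∑' k : ℕ, (8 / π * mIdx k) * r ^ (mIdx k ^ 2 - 2) *
    Real.sin ((mIdx k : ℝ) * φ + mIdx k * (π / 4))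

/-- `G = r⁻¹ ∂_φ V - ∂_r ∂_φ V`, so that `-G / r` is the mixed entry of the Hessian of `V` in
the polar frame. -/
noncomputable def GG (r φ : ℝ) : ℝ :=
  ∑' k : ℕ, (-(8 / π)) * r ^ (mIdx k ^ 2 - 1) *
    Real.cos ((mIdx k : ℝ) * φ + mIdx k * (π / 4))

lemma VV_eq (r φ : ℝ) : VV r φ = W r (π / 4 + φ) := by
  unfold VV W
  rw [← tsum_mul_left]
  refine tsum_congr fun k => ?_
  rw [show (mIdx k : ℝ) * (π / 4 + φ) = (mIdx k : ℝ) * φ + mIdx k * (π / 4) by ring]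
  ring

lemma mIdx_sq_sub (k : ℕ) : (3 : ℝ) ≤ (mIdx k : ℝ) ^ 2 - 1 := by
  have := two_le_mIdx k; nlinarith

lemma cast_sq (k : ℕ) : ((mIdx k ^ 2 : ℕ) : ℝ) = (mIdx k : ℝ) ^ 2 := by push_cast; ring

lemma cast_sq_sub (k : ℕ) : ((mIdx k ^ 2 - 1 : ℕ) : ℝ) = (mIdx k : ℝ) ^ 2 - 1 := by
  have := le_mIdx_sq k
  rw [Nat.cast_sub (by omega)]; push_cast; ring

lemma pow_split {r : ℝ} {n m : ℕ} (h : n = m + 1) : r ^ n = r * r ^ m := by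
  rw [h, pow_succ']

lemma eight_div_pi_le : 8 / π ≤ 3 := by
  have := Real.pi_gt_three
  rw [div_le_iff₀ Real.pi_pos]; linarith

lemma eight_div_pi_pos : 0 < 8 / π := by positivity

lemma cV_bound (k : ℕ) : |8 / π / (((mIdx k : ℝ) ^ 2 - 1) * mIdx k)| ≤ 3 * ((k : ℝ) + 1) := by
  have h1 := mIdx_sq_sub k
  have h2 := two_le_mIdx k
  have h3 := eight_div_pi_le
  have h4 := eight_div_pi_pos
  have hk : (0 : ℝ) ≤ k := Nat.cast_nonneg k
  have h5 : (1 : ℝ) ≤ ((mIdx k : ℝ) ^ 2 - 1) * mIdx k := by nlinarith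
  rw [abs_of_nonneg (by positivity), div_le_iff₀ (by positivity)]
  nlinarith

lemma cP_bound (k : ℕ) : |8 / π * mIdx k / ((mIdx k : ℝ) ^ 2 - 1)| ≤ 3 * ((k : ℝ) + 1) := by
  have h1 := mIdx_sq_sub k
  have h2 := two_le_mIdx k
  have h3 := eight_div_pi_le
  have h4 := eight_div_pi_pos
  have hk : (0 : ℝ) ≤ k := Nat.cast_nonneg k
  have h5 : (mIdx k : ℝ) ≤ ((mIdx k : ℝ) ^ 2 - 1) := by nlinarith
  rw [abs_of_nonneg (by positivity), div_le_iff₀ (by positivity)]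
  calc 8 / π * mIdx k ≤ 3 * ((mIdx k : ℝ) ^ 2 - 1) := by gcongr
    _ ≤ _ := by nlinarith

lemma cQ_bound (k : ℕ) : |8 / π / ((mIdx k : ℝ) ^ 2 - 1)| ≤ 3 * ((k : ℝ) + 1) := by
  have h1 := mIdx_sq_sub k
  have h3 := eight_div_pi_le
  have h4 := eight_div_pi_pos
  have hk : (0 : ℝ) ≤ k := Nat.cast_nonneg k
  rw [abs_of_nonneg (by positivity), div_le_iff₀ (by positivity)]
  nlinarith

lemma cN_bound (k : ℕ) : |8 / π * mIdx k| ≤ 12 * ((k : ℝ) + 1) := by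
  have h3 := eight_div_pi_le
  have h4 := eight_div_pi_pos
  have hm : (mIdx k : ℝ) ≤ 4 * ((k : ℝ) + 1) := by exact_mod_cast (le_mIdx k).2
  rw [abs_of_nonneg (by positivity)]
  calc 8 / π * mIdx k ≤ 3 * (4 * ((k : ℝ) + 1)) := by gcongr
    _ = _ := by ring

lemma cG_bound (k : ℕ) : |-(8 / π)| ≤ 3 * ((k : ℝ) + 1) := by
  have h3 := eight_div_pi_le
  have h4 := eight_div_pi_pos
  have hk : (0 : ℝ) ≤ k := Nat.cast_nonneg k
  rw [abs_neg, abs_of_nonneg (by positivity)]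
  nlinarith

lemma PP_continuousOn : ContinuousOn (fun q : ℝ × ℝ => PP q.1 q.2) {q | |q.1| < 1} :=
  ser_continuousOn 3 1 (by simpa using cP_bound) (fun k => by have := le_mIdx_sq k; omega)
    Real.continuous_sin Real.abs_sin_le_one

lemma QQ_continuousOn : ContinuousOn (fun q : ℝ × ℝ => QQ q.1 q.2) {q | |q.1| < 1} :=
  ser_continuousOn 3 1 (by simpa using cQ_bound) (fun k => by have := le_mIdx_sq k; omega)
    Real.continuous_cos Real.abs_cos_le_one

lemma NN_continuousOn : ContinuousOn (fun q : ℝ × ℝ => NN q.1 q.2) {q | |q.1| < 1} :=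
  ser_continuousOn 12 1 (by simpa using cN_bound) (fun k => by have := le_mIdx_sq k; omega)
    Real.continuous_sin Real.abs_sin_le_one

lemma GG_continuousOn : ContinuousOn (fun q : ℝ × ℝ => GG q.1 q.2) {q | |q.1| < 1} :=
  ser_continuousOn 3 1 (by simpa using cG_bound) (fun k => by have := le_mIdx_sq k; omega)
    Real.continuous_cos Real.abs_cos_le_one

lemma isOpen_strip : IsOpen {q : ℝ × ℝ | |q.1| < 1} := isOpen_lt (by fun_prop) (by fun_prop)

/-- Absolute convergence of the series at a point of the open strip. -/
lemma ser_summable {c : ℕ → ℝ} {e : ℕ → ℕ} (A : ℝ)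
    (hc : ∀ k, |c k| ≤ A * ((k : ℝ) + 1)) (he : ∀ k, k ≤ e k)
    {r : ℝ} (hr : |r| < 1) (g : ℕ → ℝ) (hg : ∀ k, |g k| ≤ 1) :
    Summable fun k => c k * r ^ (e k) * g k := by
  refine Summable.of_norm_bounded (summable_poly_geom A 1 (abs_nonneg r) hr) fun k => ?_
  have hA : 0 ≤ A * ((k : ℝ) + 1) := (abs_nonneg _).trans (hc k)
  rw [Real.norm_eq_abs, abs_mul, abs_mul, abs_pow, pow_one]
  calc |c k| * |r| ^ e k * |g k| ≤ (A * ((k : ℝ) + 1) * |r| ^ k) * 1 := by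
        gcongr ?_ * ?_ * ?_
        · exact hc k
        · exact pow_le_pow_of_le_one (abs_nonneg _) hr.le (he k)
        · exact hg k
    _ = _ := by ring

lemma VV_hasFDerivAt {r φ : ℝ} (hr : |r| < 1) :
    HasFDerivAt (fun q : ℝ × ℝ => VV q.1 q.2)
      (PP r φ • ContinuousLinearMap.fst ℝ ℝ ℝ + (r * QQ r φ) • ContinuousLinearMap.snd ℝ ℝ ℝ)
      (r, φ) := by
  refine (ser_hasFDerivAt 3 cV_bound (fun k => by have := le_mIdx_sq k; omega)
    (fun k => le_rfl) hr).congr_fderiv ?_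
  congr 2
  · refine tsum_congr fun k => ?_
    have h1 := mIdx_sq_sub k
    have h2 := two_le_mIdx k
    rw [cast_sq]
    field_simp
  · unfold QQ
    rw [← tsum_mul_left]
    refine tsum_congr fun k => ?_
    have h1 := mIdx_sq_sub k
    have h2 := two_le_mIdx k
    have h3 : r ^ (mIdx k ^ 2) = r * r ^ (mIdx k ^ 2 - 1) := by
      exact pow_split (by have := le_mIdx_sq k; omega)
    rw [h3]
    field_simp

lemma PP_hasFDerivAt {r φ : ℝ} (hr : |r| < 1) :
    HasFDerivAt (fun q : ℝ × ℝ => PP q.1 q.2)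
      (NN r φ • ContinuousLinearMap.fst ℝ ℝ ℝ +
        (QQ r φ - GG r φ) • ContinuousLinearMap.snd ℝ ℝ ℝ) (r, φ) := by
  refine (ser_hasFDerivAt 3 cP_bound (fun k => by have := le_mIdx_sq k; omega)
    (fun k => by omega) hr).congr_fderiv ?_
  congr 2
  · refine tsum_congr fun k => ?_
    have h1 := mIdx_sq_sub k
    have h2 := two_le_mIdx k
    rw [cast_sq_sub, Nat.sub_sub]
    field_simp
  · unfold QQ GG
    rw [← Summable.tsum_sub]
    · refine tsum_congr fun k => ?_
      have h1 := mIdx_sq_sub k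
      have h2 := two_le_mIdx k
      field_simp
      ring
    · exact ser_summable 3 cQ_bound (fun k => by have := le_mIdx_sq k; omega) hr _
        (fun k => Real.abs_cos_le_one _)
    · exact ser_summable 3 cG_bound (fun k => by have := le_mIdx_sq k; omega) hr _
        (fun k => Real.abs_cos_le_one _)

lemma QQ_eq (r φ : ℝ) : QQ r φ = ∑' k : ℕ, (8 / π / ((mIdx k : ℝ) ^ 2 - 1)) *
    r ^ (mIdx k ^ 2 - 1) * Real.sin ((mIdx k : ℝ) * φ + (mIdx k * (π / 4) + π / 2)) := by
  unfold QQ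
  refine tsum_congr fun k => ?_
  rw [← add_assoc, Real.sin_add_pi_div_two]

lemma GG_eq (r φ : ℝ) : GG r φ = ∑' k : ℕ, (-(8 / π)) *
    r ^ (mIdx k ^ 2 - 1) * Real.sin ((mIdx k : ℝ) * φ + (mIdx k * (π / 4) + π / 2)) := by
  unfold GG
  refine tsum_congr fun k => ?_
  rw [← add_assoc, Real.sin_add_pi_div_two]

lemma QQ_hasFDerivAt {r φ : ℝ} (hr0 : 0 < r) (hr : r < 1) :
    HasFDerivAt (fun q : ℝ × ℝ => QQ q.1 q.2)
      ((-(GG r φ / r)) • ContinuousLinearMap.fst ℝ ℝ ℝ +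
        (-PP r φ) • ContinuousLinearMap.snd ℝ ℝ ℝ) (r, φ) := by
  have hr' : |r| < 1 := by rwa [abs_of_pos hr0]
  simp only [QQ_eq]
  refine (ser_hasFDerivAt 3 cQ_bound (fun k => by have := le_mIdx_sq k; omega)
    (fun k => by omega) hr').congr_fderiv ?_
  congr 2
  · unfold GG
    rw [← tsum_div_const, ← tsum_neg]
    refine tsum_congr fun k => ?_
    have h1 := mIdx_sq_sub k
    have h3 : r ^ (mIdx k ^ 2 - 1) = r * r ^ (mIdx k ^ 2 - 1 - 1) := by
      exact pow_split (by have := le_mIdx_sq k; omega)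
    rw [cast_sq_sub, ← add_assoc, Real.sin_add_pi_div_two, h3]
    field_simp
  · unfold PP
    rw [← tsum_neg]
    refine tsum_congr fun k => ?_
    rw [← add_assoc, Real.cos_add_pi_div_two]
    ring

lemma GG_hasDerivAt {r : ℝ} (hr : |r| < 1) (φ : ℝ) :
    HasDerivAt (fun x => GG r x) (r * NN r φ) φ := by
  have h := ser_hasFDerivAt (d := fun k => mIdx k * (π / 4) + π / 2) (φ := φ) 3 cG_bound
    (e := fun k => mIdx k ^ 2 - 1)
    (fun k => by have := le_mIdx_sq k; omega) (fun k => by omega) hr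
  have h2 : HasDerivAt (fun x : ℝ => (r, x)) ((0 : ℝ), (1 : ℝ)) φ :=
    (hasDerivAt_const φ r).prodMk (hasDerivAt_id φ)
  have h3 := h.comp_hasDerivAt φ h2
  simp only [GG_eq]
  refine h3.congr_deriv ?_
  simp only [add_apply, smul_apply,
    ContinuousLinearMap.coe_fst', ContinuousLinearMap.coe_snd', smul_eq_mul, mul_zero, zero_add,
    mul_one]
  unfold NN
  rw [← tsum_mul_left]
  refine tsum_congr fun k => ?_
  have h3 : r ^ (mIdx k ^ 2 - 1) = r * r ^ (mIdx k ^ 2 - 2) := by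
    exact pow_split (by have := le_mIdx_sq k; omega)
  rw [← add_assoc, Real.cos_add_pi_div_two, h3]
  ring

/-! ### Symmetries, values on the sides, and convexity on the axis -/

lemma phase (k : ℕ) : (mIdx k : ℝ) * (π / 4) = k * π + π / 2 := by
  unfold mIdx; push_cast; ring

lemma sin_phase (k : ℕ) (x : ℝ) :
    Real.sin (x + mIdx k * (π / 4)) = (-1) ^ k * Real.cos x := by
  rw [phase, ← add_assoc, Real.sin_add_pi_div_two, Real.cos_add_nat_mul_pi]

lemma cos_phase (k : ℕ) (x : ℝ) :
    Real.cos (x + mIdx k * (π / 4)) = -((-1) ^ k * Real.sin x) := by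
  rw [phase, ← add_assoc, Real.cos_add_pi_div_two, Real.sin_add_nat_mul_pi]

lemma VV_neg (r φ : ℝ) : VV r (-φ) = VV r φ := by
  unfold VV
  refine tsum_congr fun k => ?_
  rw [sin_phase, sin_phase, mul_neg, Real.cos_neg]

lemma QQ_zero (r : ℝ) : QQ r 0 = 0 := by
  unfold QQ
  simp only [cos_phase]
  simp

lemma GG_zero (r : ℝ) : GG r 0 = 0 := by
  unfold GG
  simp only [cos_phase]
  simp

lemma VV_boundary (r : ℝ) : VV r (π / 4) = 0 := by
  rw [← tsum_zero (α := ℝ) (β := ℕ)]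
  refine tsum_congr fun k => ?_
  rw [sin_phase, phase, Real.cos_add_pi_div_two]
  simp [Real.sin_nat_mul_pi]

lemma VV_zero_left (φ : ℝ) : VV 0 φ = 0 := by
  refine (tsum_congr fun k => ?_).trans tsum_zero
  have := le_mIdx_sq k
  rw [zero_pow (by omega)]; ring

lemma PP_zero_left (φ : ℝ) : PP 0 φ = 0 := by
  refine (tsum_congr fun k => ?_).trans tsum_zero
  have := le_mIdx_sq k
  rw [zero_pow (by omega)]; ring

/-- Strict convexity in `r` on the axis `φ = 0` is positivity of a theta constant. -/
lemma NN_pos {r : ℝ} (hr0 : 0 < r) (hr1 : r < 1) : 0 < NN r 0 := by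
  set t : ℝ := -(4 * Real.log r) / π with ht
  have hlog : Real.log r < 0 := Real.log_neg hr0 hr1
  have ht0 : 0 < t := div_pos (by linarith) Real.pi_pos
  have hexp : ∀ k : ℕ, rexp (-(π * t) * (2 * k + 1) ^ 2) = r ^ 2 * r ^ (mIdx k ^ 2 - 2) := by
    intro k
    have h2 := le_mIdx_sq k
    rw [← pow_add, show 2 + (mIdx k ^ 2 - 2) = mIdx k ^ 2 by omega]
    have h1 : -(π * t) * (2 * (k : ℝ) + 1) ^ 2 = ((mIdx k ^ 2 : ℕ) : ℝ) * Real.log r := by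
      rw [ht, cast_sq]; unfold mIdx; push_cast
      field_simp; ring
    rw [h1, Real.exp_nat_mul, Real.exp_log hr0]
  have h := (hasSum_alternating ht0).mul_left (8 / π / r ^ 2)
  have h2 : NN r 0 = 8 / π / r ^ 2 * HurwitzZeta.sinKernel ((1 / 4 : ℝ) : UnitAddCircle) t := by
    rw [← h.tsum_eq]
    refine tsum_congr fun k => ?_
    rw [sin_phase, hexp]
    have : (mIdx k : ℝ) = 2 * (2 * k + 1) := by unfold mIdx; push_cast; ring
    rw [this]
    simp only [mul_zero, Real.cos_zero]
    field_simp
  rw [h2]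
  have := sinKernel_pos ht0
  positivity

/-- Truncation of the radius to `[0,1]`. -/
noncomputable def clamp (r : ℝ) : ℝ := max 0 (min 1 r)

lemma clamp_of_mem {r : ℝ} (h : r ∈ Icc (0 : ℝ) 1) : clamp r = r := by
  unfold clamp; rw [min_eq_right h.2, max_eq_right h.1]

/-- `V` is continuous up to `r = 1`; extending by truncation gives a globally continuous map. -/
lemma VV_clamp_continuous : Continuous (fun q : ℝ × ℝ => VV (clamp q.1) q.2) := by
  unfold VV clamp
  have hs : Summable fun k : ℕ => 3 * (1 / ((k : ℝ) + 1) ^ 2) := by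
    have := (summable_nat_add_iff 1).2 (Real.summable_one_div_nat_pow (p := 2) |>.2 (by norm_num))
    simpa using this.mul_left 3
  refine continuous_tsum (fun k => by fun_prop) hs fun k q => ?_
  have h1 := mIdx_sq_sub k
  have h2 := two_le_mIdx k
  have h4 := eight_div_pi_pos
  have hk : (0 : ℝ) ≤ k := Nat.cast_nonneg k
  have hm : (k : ℝ) + 1 ≤ mIdx k := by exact_mod_cast (by have := le_mIdx k; omega : k + 1 ≤ mIdx k)
  have h5 : ((k : ℝ) + 1) ^ 2 ≤ ((mIdx k : ℝ) ^ 2 - 1) * mIdx k := by nlinarith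
  have h6 : 0 ≤ max 0 (min 1 q.1) := le_max_left _ _
  have h7 : max 0 (min 1 q.1) ≤ 1 := max_le zero_le_one (min_le_left _ _)
  rw [Real.norm_eq_abs, abs_mul, abs_mul, abs_of_nonneg (by positivity : 0 ≤ 8 / π / (((mIdx k : ℝ) ^ 2 - 1) * mIdx k)),
    abs_of_nonneg (by positivity)]
  calc _ ≤ (3 / ((k : ℝ) + 1) ^ 2) * 1 * 1 := by
        gcongr
        · exact eight_div_pi_le
        · exact pow_le_one₀ h6 h7
        · exact Real.abs_sin_le_one _
    _ = _ := by ring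

/-! ### Boundary values at `r = 1` -/

lemma hasSum_sin_cubed {x : ℝ} (hx : x ∈ Icc (0 : ℝ) 1) :
    HasSum (fun n : ℕ => 1 / (n : ℝ) ^ 3 * Real.sin (2 * π * n * x))
      (2 * π ^ 3 / 3 * (x ^ 3 - 3 / 2 * x ^ 2 + x / 2)) := by
  have h := hasSum_one_div_nat_pow_mul_sin one_ne_zero hx
  have h1 : (Polynomial.map (algebraMap ℚ ℝ) (Polynomial.bernoulli (2 * 1 + 1))).eval x
      = x ^ 3 - 3 / 2 * x ^ 2 + x / 2 := by
    simp [Polynomial.bernoulli_def, Finset.sum_range_succ, bernoulli_eq_bernoulli'_of_ne_one,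
      Nat.choose]
    ring
  rw [h1] at h
  have e : 2 * π ^ 3 / 3 * (x ^ 3 - 3 / 2 * x ^ 2 + x / 2) = (-1) ^ (1 + 1) *
      (2 * π) ^ (2 * 1 + 1) / 2 / ((Nat.factorial (2 * 1 + 1) : ℕ) : ℝ) *
        (x ^ 3 - 3 / 2 * x ^ 2 + x / 2) := by
    rw [show ((Nat.factorial (2 * 1 + 1) : ℕ) : ℝ) = 6 by norm_num [Nat.factorial]]
    ring
  rw [e]
  exact h

/-- The cubic sine series over the frequencies `2, 6, 10, …` is a quadratic polynomial. -/
lemma hasSum_sin_mIdx {θ : ℝ} (hθ : θ ∈ Icc (0 : ℝ) (π / 2)) :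
    HasSum (fun k : ℕ => 1 / (mIdx k : ℝ) ^ 3 * Real.sin (mIdx k * θ))
      (π / 16 * (π * θ / 2 - θ ^ 2)) := by
  have hpi := Real.pi_pos
  have hx1 : θ / π ∈ Icc (0 : ℝ) 1 :=
    ⟨div_nonneg hθ.1 hpi.le, by rw [div_le_one hpi]; linarith [hθ.2]⟩
  have hx2 : 2 * (θ / π) ∈ Icc (0 : ℝ) 1 :=
    ⟨mul_nonneg (by norm_num) hx1.1, by
      rw [← mul_div_assoc, div_le_one hpi]; linarith [hθ.2]⟩
  have h1 := hasSum_sin_cubed hx1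
  have h2 := (hasSum_sin_cubed hx2).mul_left (1 / 8)
  set f : ℕ → ℝ := fun n => 1 / (n : ℝ) ^ 3 * Real.sin (2 * π * n * (θ / π)) with hf
  have he : HasSum (fun k => f (2 * k)) (1 / 8 * (2 * π ^ 3 / 3 *
      ((2 * (θ / π)) ^ 3 - 3 / 2 * (2 * (θ / π)) ^ 2 + (2 * (θ / π)) / 2))) := by
    refine h2.congr_fun fun k => ?_
    simp only [hf]; push_cast
    rw [show 2 * π * (2 * (k : ℝ)) * (θ / π) = 2 * π * k * (2 * (θ / π)) by ring]
    rcases eq_or_ne (k : ℝ) 0 with hk | hk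
    · simp [hk]
    · field_simp; ring
  have ho : Summable (fun k => f (2 * k + 1)) :=
    h1.summable.comp_injective (i := fun k => 2 * k + 1) fun a b hab => by simp only at hab; omega
  have htot := (he.even_add_odd ho.hasSum).unique h1
  have hsum : ∑' k, f (2 * k + 1) = 8 * (π / 16 * (π * θ / 2 - θ ^ 2)) := by
    have h3 : ∑' k, f (2 * k + 1) = 2 * π ^ 3 / 3 * ((θ / π) ^ 3 - 3 / 2 * (θ / π) ^ 2 + (θ / π) / 2)
       - (1 / 8 * (2 * π ^ 3 / 3 *
      ((2 * (θ / π)) ^ 3 - 3 / 2 * (2 * (θ / π)) ^ 2 + (2 * (θ / π)) / 2))) := by linarith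
    rw [h3]; field_simp; ring
  have h4 := ho.hasSum.mul_left (1 / 8)
  rw [hsum] at h4
  have e : π / 16 * (π * θ / 2 - θ ^ 2) = 1 / 8 * (8 * (π / 16 * (π * θ / 2 - θ ^ 2))) := by ring
  rw [e]
  refine h4.congr_fun fun k => ?_
  simp only [hf]
  have : (mIdx k : ℝ) = 2 * (2 * k + 1) := by unfold mIdx; push_cast; ring
  push_cast
  rw [this, show 2 * π * (2 * (k : ℝ) + 1) * (θ / π) = 2 * (2 * k + 1) * θ by field_simp]
  have hk : (0 : ℝ) ≤ k := Nat.cast_nonneg k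
  field_simp; ring

/-- The sine series with `S1 θ = (π/8) W 1 θ`. -/
noncomputable def S1 (θ : ℝ) : ℝ :=
  ∑' k : ℕ, 1 / (((mIdx k : ℝ) ^ 2 - 1) * mIdx k) * Real.sin (mIdx k * θ)

/-- The part of `S1` left after splitting off the cubic sine series, by
`1/((m² - 1) m) = 1/m³ + 1/((m² - 1) m³)`; unlike `S1`, its
series stays absolutely convergent after two termwise differentiations. -/
noncomputable def Q1 (θ : ℝ) : ℝ :=
  ∑' k : ℕ, 1 / (((mIdx k : ℝ) ^ 2 - 1) * mIdx k ^ 3) * Real.sin (mIdx k * θ)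

/-- The derivative of `Q1`. -/
noncomputable def Q2 (θ : ℝ) : ℝ :=
  ∑' k : ℕ, 1 / (((mIdx k : ℝ) ^ 2 - 1) * mIdx k ^ 2) * Real.cos (mIdx k * θ)

lemma summable_sq : Summable fun k : ℕ => 1 / ((k : ℝ) + 1) ^ 2 := by
  have := (summable_nat_add_iff 1).2 (Real.summable_one_div_nat_pow (p := 2) |>.2 (by norm_num))
  simpa using this

lemma coef_bound (k j : ℕ) (g : ℝ) (hg : |g| ≤ 1) (hj : 1 ≤ j) :
    ‖1 / (((mIdx k : ℝ) ^ 2 - 1) * mIdx k ^ j) * g‖ ≤ 1 / ((k : ℝ) + 1) ^ 2 := by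
  have h1 := mIdx_sq_sub k
  have h2 := two_le_mIdx k
  have hk : (0 : ℝ) ≤ k := Nat.cast_nonneg k
  have hm : (k : ℝ) + 1 ≤ mIdx k := by exact_mod_cast (by have := le_mIdx k; omega : k + 1 ≤ mIdx k)
  have h3 : (mIdx k : ℝ) ≤ mIdx k ^ j := le_self_pow₀ (by linarith) (by omega)
  have h5 : ((k : ℝ) + 1) ^ 2 ≤ ((mIdx k : ℝ) ^ 2 - 1) * mIdx k ^ j := by
    calc ((k : ℝ) + 1) ^ 2 ≤ ((mIdx k : ℝ) ^ 2 - 1) * mIdx k := by nlinarith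
      _ ≤ _ := by gcongr
  rw [Real.norm_eq_abs, abs_mul, abs_of_nonneg (by positivity)]
  calc _ ≤ 1 / ((k : ℝ) + 1) ^ 2 * 1 := by gcongr
    _ = _ := mul_one _

lemma Q1_hasDerivAt (θ : ℝ) : HasDerivAt Q1 (Q2 θ) θ := by
  unfold Q1 Q2
  refine hasDerivAt_tsum (y₀ := 0)
    (g := fun k θ => 1 / (((mIdx k : ℝ) ^ 2 - 1) * mIdx k ^ 3) * Real.sin (mIdx k * θ))
    (g' := fun k θ => 1 / (((mIdx k : ℝ) ^ 2 - 1) * mIdx k ^ 2) * Real.cos (mIdx k * θ))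
    summable_sq ?_ ?_ ?_ θ
  · intro k y
    have h1 := mIdx_sq_sub k
    have h2 := two_le_mIdx k
    have := (((hasDerivAt_id y).const_mul (mIdx k : ℝ)).sin).const_mul
      (1 / (((mIdx k : ℝ) ^ 2 - 1) * mIdx k ^ 3))
    refine this.congr_deriv ?_
    simp only [id, mul_one]
    field_simp
  · exact fun k y => coef_bound k 2 _ (Real.abs_cos_le_one _) (by norm_num)
  · simp

lemma Q2_hasDerivAt (θ : ℝ) : HasDerivAt Q2 (-S1 θ) θ := by
  have hs : -S1 θ = ∑' k : ℕ, 1 / (((mIdx k : ℝ) ^ 2 - 1) * mIdx k ^ 1) * -Real.sin (mIdx k * θ) := by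
    unfold S1
    rw [← tsum_neg]
    refine tsum_congr fun k => ?_
    ring
  rw [hs]
  unfold Q2
  refine hasDerivAt_tsum (y₀ := 0)
    (g := fun k θ => 1 / (((mIdx k : ℝ) ^ 2 - 1) * mIdx k ^ 2) * Real.cos (mIdx k * θ))
    (g' := fun k θ => 1 / (((mIdx k : ℝ) ^ 2 - 1) * mIdx k ^ 1) * -Real.sin (mIdx k * θ))
    summable_sq ?_ ?_ ?_ θ
  · intro k y
    have h1 := mIdx_sq_sub k
    have h2 := two_le_mIdx k
    have := (((hasDerivAt_id y).const_mul (mIdx k : ℝ)).cos).const_mul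
      (1 / (((mIdx k : ℝ) ^ 2 - 1) * mIdx k ^ 2))
    refine this.congr_deriv ?_
    simp only [id, mul_one]
    field_simp
  · exact fun k y => coef_bound k 1 _ (by rw [abs_neg]; exact Real.abs_sin_le_one _) le_rfl
  · exact Summable.of_norm_bounded summable_sq
      fun k => coef_bound k 2 _ (Real.abs_cos_le_one _) (by norm_num)

lemma S1_eq_poly {θ : ℝ} (hθ : θ ∈ Icc (0 : ℝ) (π / 2)) :
    S1 θ = π / 16 * (π * θ / 2 - θ ^ 2) + Q1 θ := by
  have h1 := hasSum_sin_mIdx hθ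
  have h2 : Summable fun k : ℕ =>
      1 / (((mIdx k : ℝ) ^ 2 - 1) * mIdx k ^ 3) * Real.sin (mIdx k * θ) :=
    Summable.of_norm_bounded summable_sq
      fun k => coef_bound k 3 _ (Real.abs_sin_le_one _) (by norm_num)
  rw [Q1, ← h1.tsum_eq, ← h1.summable.tsum_add h2]
  refine tsum_congr fun k => ?_
  have h1 := mIdx_sq_sub k
  have h2 := two_le_mIdx k
  field_simp
  ring

lemma S1_zero : S1 0 = 0 := by unfold S1; simp

lemma S1_pi_half : S1 (π / 2) = 0 := by
  unfold S1
  refine (tsum_congr fun k => ?_).trans tsum_zero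
  rw [show (mIdx k : ℝ) * (π / 2) = ((2 * k + 1 : ℕ) : ℝ) * π by
    unfold mIdx; push_cast; ring, Real.sin_nat_mul_pi, mul_zero]

/-- On `[0, π/2]` the function `(8/π) S1` solves `y'' + y = -1`, `y(0) = y(π/2) = 0`. -/
lemma S1_eq {θ : ℝ} (hθ : θ ∈ Icc (0 : ℝ) (π / 2)) :
    8 / π * S1 θ = Real.cos θ + Real.sin θ - 1 := by
  have hpi := Real.pi_pos
  set D : ℝ → ℝ := fun x => 8 / π * (π / 16 * (π * x / 2 - x ^ 2) + Q1 x)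
    - (Real.cos x + Real.sin x - 1) with hD
  set D' : ℝ → ℝ := fun x => 8 / π * (π / 16 * (π / 2 - 2 * x) + Q2 x)
    - (-Real.sin x + Real.cos x) with hD'
  have hd : ∀ x, HasDerivAt D (D' x) x := by
    intro x
    have hp : HasDerivAt (fun x : ℝ => π * x / 2 - x ^ 2) (π / 2 - 2 * x) x := by
      have := (((hasDerivAt_id x).const_mul π).div_const 2).sub ((hasDerivAt_id x).pow 2)
      refine this.congr_deriv ?_
      simp
    have := (((hp.const_mul (π / 16)).add (Q1_hasDerivAt x)).const_mul (8 / π)).sub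
      (((Real.hasDerivAt_cos x).add (Real.hasDerivAt_sin x)).sub_const 1)
    exact this
  have hDS : ∀ x ∈ Icc (0 : ℝ) (π / 2), D x = 8 / π * S1 x - (Real.cos x + Real.sin x - 1) := by
    intro x hx; rw [hD, S1_eq_poly hx]
  have hd' : ∀ x ∈ Icc (0 : ℝ) (π / 2), HasDerivAt D' (-D x) x := by
    intro x hx
    have hp : HasDerivAt (fun x : ℝ => π / 2 - 2 * x) (-2) x := by
      have := ((hasDerivAt_id x).const_mul 2).const_sub (π / 2)
      refine this.congr_deriv ?_
      simp
    have := (((hp.const_mul (π / 16)).add (Q2_hasDerivAt x)).const_mul (8 / π)).sub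
      (((Real.hasDerivAt_sin x).neg).add (Real.hasDerivAt_cos x))
    refine this.congr_deriv ?_
    rw [hDS x hx]
    field_simp
    ring
  -- Since `D + D'' = 0`, the rotated pair `(D cos - D' sin, D sin + D' cos)` is constant.
  have hp : ∀ x ∈ Icc (0 : ℝ) (π / 2),
      HasDerivAt (fun x => D x * Real.cos x - D' x * Real.sin x) 0 x := by
    intro x hx
    refine (((hd x).mul (Real.hasDerivAt_cos x)).sub
      ((hd' x hx).mul (Real.hasDerivAt_sin x))).congr_deriv ?_
    ring
  have hq : ∀ x ∈ Icc (0 : ℝ) (π / 2),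
      HasDerivAt (fun x => D x * Real.sin x + D' x * Real.cos x) 0 x := by
    intro x hx
    refine (((hd x).mul (Real.hasDerivAt_sin x)).add
      ((hd' x hx).mul (Real.hasDerivAt_cos x))).congr_deriv ?_
    ring
  have hp0 := constant_of_has_deriv_right_zero (a := 0) (b := π / 2)
    (fun x hx => (hp x hx).continuousAt.continuousWithinAt)
    (fun x hx => (hp x (Ico_subset_Icc_self hx)).hasDerivWithinAt)
  have hq0 := constant_of_has_deriv_right_zero (a := 0) (b := π / 2)
    (fun x hx => (hq x hx).continuousAt.continuousWithinAt)
    (fun x hx => (hq x (Ico_subset_Icc_self hx)).hasDerivWithinAt)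
  have hm : π / 2 ∈ Icc (0 : ℝ) (π / 2) := right_mem_Icc.2 (by positivity)
  have hm0 : (0 : ℝ) ∈ Icc (0 : ℝ) (π / 2) := left_mem_Icc.2 (by positivity)
  have hD0 : D 0 = 0 := by rw [hDS 0 hm0, S1_zero]; simp
  have hD1 : D (π / 2) = 0 := by rw [hDS _ hm, S1_pi_half]; simp
  have e1 := hp0 θ hθ
  have e2 := hq0 θ hθ
  have e3 := hq0 _ hm
  simp only [hD0, hD1, Real.sin_zero, Real.cos_zero, Real.sin_pi_div_two, Real.cos_pi_div_two,
    mul_zero, sub_zero, add_zero, zero_add, mul_one] at e1 e2 e3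
  rw [← e3] at e2
  have : D θ = 0 := by
    have h := Real.sin_sq_add_cos_sq θ
    calc D θ = (D θ * Real.cos θ - D' θ * Real.sin θ) * Real.cos θ
          + (D θ * Real.sin θ + D' θ * Real.cos θ) * Real.sin θ := by
            linear_combination (-D θ) * h
      _ = 0 := by rw [e1, e2]; ring
  rw [hDS θ hθ] at this
  linarith

/-- The value at the terminal time `r = 1` of the backward heat equation. -/
lemma VV_one {φ : ℝ} (hφ : φ ∈ Icc (-(π / 4)) (π / 4)) :
    VV 1 φ = √2 * Real.cos φ - 1 := by
  have h1 : VV 1 φ = 8 / π * S1 (π / 4 + φ) := by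
    rw [VV_eq, W, S1]
    congr 1
    refine tsum_congr fun k => ?_
    rw [one_pow]; ring
  rw [h1, S1_eq ⟨by linarith [hφ.1], by linarith [hφ.2]⟩, Real.cos_add, Real.sin_add,
    Real.cos_pi_div_four, Real.sin_pi_div_four]
  ring

/-! ### Maximum principle and barrier at `r = 1` -/

/-- A maximum principle for subsolutions of the backward heat equation
`E_φφ + r E_r = 0`, for which the parabolic boundary consists of `r = 1` and `φ = ± b`. -/
lemma max_principle {ρ b M : ℝ} (hρ : 0 < ρ) (hb : 0 < b)
    {E Er E1 E2 : ℝ → ℝ → ℝ}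
    (hc : ContinuousOn (fun q : ℝ × ℝ => E q.1 q.2) (Icc ρ 1 ×ˢ Icc (-b) b))
    (hr : ∀ r ∈ Ico ρ 1, ∀ φ ∈ Ioo (-b) b, HasDerivAt (fun x => E x φ) (Er r φ) r)
    (h1 : ∀ r ∈ Ico ρ 1, ∀ φ ∈ Ioo (-b) b, HasDerivAt (fun x => E r x) (E1 r φ) φ)
    (h2 : ∀ r ∈ Ico ρ 1, ∀ φ ∈ Ioo (-b) b, HasDerivAt (fun x => E1 r x) (E2 r φ) φ)
    (hL : ∀ r ∈ Ico ρ 1, ∀ φ ∈ Ioo (-b) b, 0 ≤ E2 r φ + r * Er r φ)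
    (hbd1 : ∀ φ ∈ Icc (-b) b, E 1 φ ≤ M)
    (hbd2 : ∀ r ∈ Icc ρ 1, E r (-b) ≤ M ∧ E r b ≤ M) :
    ∀ r ∈ Icc ρ 1, ∀ φ ∈ Icc (-b) b, E r φ ≤ M := by
  intro r1 hr1 φ1 hφ1
  by_contra! hlt
  -- Adding `ε φ²` makes the subsolution inequality strict, so an interior maximum is impossible.
  set ε := (E r1 φ1 - M) / (2 * b ^ 2) with hε
  have hε0 : 0 < ε := div_pos (by linarith) (by positivity)
  have hεb : E r1 φ1 = M + 2 * (ε * b ^ 2) := by rw [hε]; field_simp; ring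
  have hεb' : 0 < ε * b ^ 2 := by positivity
  have hK : IsCompact (Icc ρ 1 ×ˢ Icc (-b) b : Set (ℝ × ℝ)) := isCompact_Icc.prod isCompact_Icc
  obtain ⟨⟨r2, φ2⟩, hm, hmax⟩ := hK.exists_isMaxOn (f := fun q : ℝ × ℝ => E q.1 q.2 + ε * q.2 ^ 2)
    ⟨(r1, φ1), hr1, hφ1⟩ (hc.add (by fun_prop))
  have hmax' : ∀ r ∈ Icc ρ 1, ∀ φ ∈ Icc (-b) b,
      E r φ + ε * φ ^ 2 ≤ E r2 φ2 + ε * φ2 ^ 2 := fun r h φ h' => hmax (a := (r, φ)) ⟨h, h'⟩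
  obtain ⟨hr2, hφ2⟩ := hm
  simp only at hr2 hφ2
  have hsq : φ2 ^ 2 ≤ b ^ 2 := sq_le_sq' hφ2.1 hφ2.2
  have hbig : M < E r2 φ2 := by
    have := hmax' r1 hr1 φ1 hφ1
    nlinarith [sq_nonneg φ1, mul_le_mul_of_nonneg_left hsq hε0.le, mul_nonneg hε0.le (sq_nonneg φ1)]
  have hr2' : r2 ∈ Ico ρ 1 := ⟨hr2.1, lt_of_le_of_ne hr2.2 fun h => by
    have := hbd1 φ2 hφ2; rw [← h] at this; linarith⟩
  have hφ2' : φ2 ∈ Ioo (-b) b :=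
    ⟨lt_of_le_of_ne hφ2.1 fun h => by have := (hbd2 r2 hr2).1; rw [h] at this; linarith,
     lt_of_le_of_ne hφ2.2 fun h => by have := (hbd2 r2 hr2).2; rw [← h] at this; linarith⟩
  have hEr : Er r2 φ2 ≤ 0 := by
    by_contra! hpos
    have hd := (hasDerivAt_iff_tendsto_slope.1 (hr r2 hr2' φ2 hφ2')).eventually (lt_mem_nhds hpos)
    have hd' := hd.filter_mono
      (nhdsWithin_mono (s := Ioi r2) r2 fun x (hx : r2 < x) => hx.ne')
    obtain ⟨x, hx, hx1⟩ := (hd'.and (Ioo_mem_nhdsGT hr2'.2)).exists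
    rw [slope_def_field, div_pos_iff_of_pos_right (sub_pos.2 hx1.1)] at hx
    have := hmax' x ⟨hr2.1.trans hx1.1.le, hx1.2.le⟩ φ2 hφ2
    linarith
  have hE2 : 0 ≤ E2 r2 φ2 := by
    have := hL r2 hr2' φ2 hφ2'
    nlinarith [mul_nonneg (hρ.le.trans hr2.1) (neg_nonneg.2 hEr)]
  set f : ℝ → ℝ := fun x => E r2 x + ε * x ^ 2 with hf
  have hlm : IsLocalMax f φ2 := by
    filter_upwards [Ioo_mem_nhds hφ2'.1 hφ2'.2] with x hx
    exact hmax' r2 hr2 x (Ioo_subset_Icc_self hx)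
  have hfd : ∀ x ∈ Ioo (-b) b, HasDerivAt f (E1 r2 x + ε * (2 * x)) x := fun x hx => by
    have := (h1 r2 hr2' x hx).add (((hasDerivAt_id x).pow 2).const_mul ε)
    refine this.congr_deriv ?_
    simp
  have hdf : deriv f =ᶠ[𝓝 φ2] fun x => E1 r2 x + ε * (2 * x) := by
    filter_upwards [Ioo_mem_nhds hφ2'.1 hφ2'.2] with x hx using (hfd x hx).deriv
  have hddf : deriv (deriv f) φ2 = E2 r2 φ2 + ε * 2 := by
    rw [hdf.deriv_eq]
    have := (h2 r2 hr2' φ2 hφ2').add (((hasDerivAt_id φ2).const_mul 2).const_mul ε)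
    refine (this.congr_deriv ?_).deriv
    simp
  have hmin : IsLocalMin f φ2 := isLocalMin_of_deriv_deriv_pos (by rw [hddf]; linarith)
    hlm.deriv_eq_zero (hfd φ2 hφ2').continuousAt
  have hconst : f =ᶠ[𝓝 φ2] fun _ => f φ2 := by
    filter_upwards [hlm, hmin] with x hx hx' using le_antisymm hx hx'
  have : deriv (deriv f) φ2 = 0 := by
    rw [hconst.deriv.deriv_eq]; simp
  linarith

lemma VV_hasDerivAt_left {r φ : ℝ} (hr : |r| < 1) : HasDerivAt (fun x => VV x φ) (PP r φ) r := by
  have := (VV_hasFDerivAt (φ := φ) hr).comp_hasDerivAt r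
    ((hasDerivAt_id r).prodMk (hasDerivAt_const r φ))
  refine this.congr_deriv ?_
  simp

lemma VV_hasDerivAt_right {r φ : ℝ} (hr : |r| < 1) :
    HasDerivAt (fun x => VV r x) (r * QQ r φ) φ := by
  have := (VV_hasFDerivAt (φ := φ) hr).comp_hasDerivAt φ
    ((hasDerivAt_const φ r).prodMk (hasDerivAt_id φ))
  refine this.congr_deriv ?_
  simp

lemma PP_hasDerivAt_left {r φ : ℝ} (hr : |r| < 1) : HasDerivAt (fun x => PP x φ) (NN r φ) r := by
  have := (PP_hasFDerivAt (φ := φ) hr).comp_hasDerivAt r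
    ((hasDerivAt_id r).prodMk (hasDerivAt_const r φ))
  refine this.congr_deriv ?_
  simp

lemma QQ_hasDerivAt_right {r φ : ℝ} (hr0 : 0 < r) (hr : r < 1) :
    HasDerivAt (fun x => QQ r x) (-PP r φ) φ := by
  have := (QQ_hasFDerivAt (φ := φ) hr0 hr).comp_hasDerivAt φ
    ((hasDerivAt_const φ r).prodMk (hasDerivAt_id φ))
  refine this.congr_deriv ?_
  simp

lemma VV_continuousOn (s : Set ℝ) :
    ContinuousOn (fun q : ℝ × ℝ => VV q.1 q.2) (Icc 0 1 ×ˢ s) :=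
  VV_clamp_continuous.continuousOn.congr fun q hq => by
    simp only [clamp_of_mem hq.1]

/-- Upper bound for `V(·, 0)` near `r = 1`, tangent there to the line `√2 r - 1`: comparison with
the supersolution `√2 r cos φ - 1 + C (φ⁴ + 24 φ² (1 - r) + 48 (1 - r)²)`. -/
lemma VV_barrier : ∃ C > (0 : ℝ), ∀ r ∈ Icc (1 / 2 : ℝ) 1,
    VV r 0 ≤ √2 * r - 1 + C * (1 - r) ^ 2 := by
  have hpi := Real.pi_pos
  -- With this `C` the supersolution is nonnegative, hence at least `V = 0`, at `φ = ±π/4`.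
  set C := 1 / (π / 4) ^ 4 with hC
  have hC0 : 0 < C := by positivity
  have hC1 : C * (π / 4) ^ 4 = 1 := by rw [hC]; field_simp
  refine ⟨48 * C, by positivity, fun r hr => ?_⟩
  have key := max_principle (ρ := 1 / 2) (b := π / 4) (M := 0) (by norm_num) (by positivity)
    (E := fun r φ => VV r φ - (√2 * r * Real.cos φ - 1
      + C * (φ ^ 4 + 24 * φ ^ 2 * (1 - r) + 48 * (1 - r) ^ 2)))
    (Er := fun r φ => PP r φ - (√2 * Real.cos φ
      + C * (-(24 * φ ^ 2) - 96 * (1 - r))))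
    (E1 := fun r φ => r * QQ r φ - (-(√2 * r * Real.sin φ)
      + C * (4 * φ ^ 3 + 48 * φ * (1 - r))))
    (E2 := fun r φ => r * -PP r φ - (-(√2 * r * Real.cos φ)
      + C * (12 * φ ^ 2 + 48 * (1 - r))))
    ?_ ?_ ?_ ?_ ?_ ?_ ?_ r hr 0 ⟨by linarith, by positivity⟩
  · simp at key; linarith
  · refine ((VV_continuousOn _).mono (prod_mono (Icc_subset_Icc (by norm_num) le_rfl)
      subset_rfl)).sub (Continuous.continuousOn (by fun_prop))
  · intro r hr φ _
    have hr' : |r| < 1 := abs_lt.2 ⟨by linarith [hr.1], hr.2⟩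
    have hi := hasDerivAt_id r
    have := (VV_hasDerivAt_left (φ := φ) hr').sub ((((hi.const_mul √2).mul_const
      (Real.cos φ)).sub_const 1).add (((((hi.const_sub 1).const_mul (24 * φ ^ 2)).const_add
        (φ ^ 4)).add (((hi.const_sub 1).pow 2).const_mul 48)).const_mul C))
    refine this.congr_deriv ?_
    simp only [id, Nat.cast_ofNat]; ring
  · intro r hr φ _
    have hr' : |r| < 1 := abs_lt.2 ⟨by linarith [hr.1], hr.2⟩
    have hi := hasDerivAt_id φ
    have := (VV_hasDerivAt_right (φ := φ) hr').sub ((((Real.hasDerivAt_cos φ).const_mul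
      (√2 * r)).sub_const 1).add (((((hi.pow 4).add (((hi.pow 2).const_mul 24).mul_const
        (1 - r))).add_const (48 * (1 - r) ^ 2))).const_mul C))
    refine this.congr_deriv ?_
    simp only [id, Nat.cast_ofNat]; ring
  · intro r hr φ _
    have hi := hasDerivAt_id φ
    have := ((QQ_hasDerivAt_right (φ := φ) (by linarith [hr.1]) hr.2).const_mul r).sub
      ((((Real.hasDerivAt_sin φ).const_mul
      (√2 * r)).neg).add ((((hi.pow 3).const_mul 4).add ((hi.const_mul 48).mul_const
        (1 - r))).const_mul C))
    refine this.congr_deriv ?_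
    simp only [id, Nat.cast_ofNat]; ring
  · intro r hr φ _
    have : 0 ≤ C * (12 * φ ^ 2 * (2 * r - 1) + 48 * (1 - r) * (2 * r - 1)) := by
      have h1 : 0 ≤ 2 * r - 1 := by linarith [hr.1]
      have h2 : 0 ≤ 1 - r := by linarith [hr.2]
      positivity
    linarith
  · intro φ hφ
    simp only [VV_one hφ]
    have : 0 ≤ C * φ ^ 4 := by positivity
    linarith
  · intro r hr
    have h2 : 0 ≤ 1 - r := by linarith [hr.2]
    have h3 : 0 ≤ r := by linarith [hr.1]
    have : 0 ≤ C * (24 * (π / 4) ^ 2 * (1 - r) + 48 * (1 - r) ^ 2) := by positivity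
    have : 0 ≤ √2 * r * Real.cos (π / 4) := by rw [Real.cos_pi_div_four]; positivity
    simp only [VV_neg, VV_boundary, Real.cos_neg]
    constructor <;> nlinarith

/-! ### The critical radius on the diagonal and the gradient of `V` -/

/-- The function whose min-max is `u`, in coordinates adapted to the diagonal: `θ = π/4 + φ`,
`x = (α - s)/√2`, `y = (α + s)/√2`. -/
noncomputable def FF (α s r φ : ℝ) : ℝ := r * (α * Real.cos φ + s * Real.sin φ) - VV r φ

lemma PP_strictMonoOn : StrictMonoOn (fun r => PP r 0) (Ico 0 1) := by
  refine strictMonoOn_of_deriv_pos (convex_Ico 0 1) ?_ ?_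
  · intro r hr
    exact (PP_hasDerivAt_left (abs_lt.2 ⟨by linarith [hr.1], hr.2⟩)).continuousAt.continuousWithinAt
  · intro r hr
    rw [interior_Ico] at hr
    rw [(PP_hasDerivAt_left (abs_lt.2 ⟨by linarith [hr.1], hr.2⟩)).deriv]
    exact NN_pos hr.1 hr.2

lemma VV_left_continuousOn (φ : ℝ) : ContinuousOn (fun r => VV r φ) (Icc 0 1) :=
  (VV_continuousOn univ).comp (f := fun r : ℝ => (r, φ)) (by fun_prop) fun _ hr => ⟨hr, trivial⟩

/-- The slope of `V(·, 0)` near `r = 1` exceeds every `α < √2`, by the mean value theorem and the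
barrier. -/
lemma exists_PP_gt {α : ℝ} (hα : α < √2) : ∃ r ∈ Ioo (0 : ℝ) 1, α < PP r 0 := by
  obtain ⟨C, hC, hb⟩ := VV_barrier
  set η := min (1 / 2) ((√2 - α) / (2 * C)) with hη
  have hη0 : 0 < η := lt_min (by norm_num) (div_pos (by linarith) (by positivity))
  have hη1 : η ≤ 1 / 2 := min_le_left _ _
  have hη2 : C * η < √2 - α := by
    have : η ≤ (√2 - α) / (2 * C) := min_le_right _ _
    rw [le_div_iff₀ (by positivity)] at this
    linarith
  obtain ⟨ξ, hξ, he⟩ := exists_hasDerivAt_eq_slope (fun r => VV r 0) (fun r => PP r 0)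
    (show 1 - η < 1 by linarith)
    ((VV_left_continuousOn 0).mono (Icc_subset_Icc (by linarith) le_rfl))
    (fun x hx => VV_hasDerivAt_left (abs_lt.2 ⟨by linarith [hx.1], hx.2⟩))
  refine ⟨ξ, ⟨by linarith [hξ.1], hξ.2⟩, ?_⟩
  rw [he, lt_div_iff₀ (by linarith), VV_one ⟨by linarith [Real.pi_pos], by positivity⟩,
    Real.cos_zero]
  have := hb (1 - η) ⟨by linarith, by linarith⟩
  nlinarith

/-- Along the diagonal direction the concave function `r ↦ rα - V(r,0)` has a unique interior
maximum `r₀`. -/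
lemma exists_r0 {α : ℝ} (hα : α ∈ Ioo 0 √2) : ∃ r0 ∈ Ioo (0 : ℝ) 1, PP r0 0 = α ∧
    ∀ r ∈ Icc (0 : ℝ) 1, r ≠ r0 → FF α 0 r 0 < FF α 0 r0 0 := by
  obtain ⟨ξ, hξ, hα'⟩ := exists_PP_gt hα.2
  have hcont : ContinuousOn (fun r => PP r 0) (Icc 0 ξ) := fun r hr =>
    (PP_hasDerivAt_left (abs_lt.2 ⟨by linarith [hr.1], hr.2.trans_lt hξ.2⟩)).continuousAt.continuousWithinAt
  obtain ⟨r0, hr0, he⟩ := intermediate_value_Ioo hξ.1.le hcont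
    (show α ∈ Ioo (PP 0 0) (PP ξ 0) from ⟨by rw [PP_zero_left]; exact hα.1, hα'⟩)
  simp only at he
  have hr01 : r0 < 1 := hr0.2.trans hξ.2
  have hd : ∀ r ∈ Ioo (0 : ℝ) 1, HasDerivAt (fun r => FF α 0 r 0) (α - PP r 0) r := by
    intro r hr
    have := ((hasDerivAt_id r).mul_const (α * Real.cos 0 + 0 * Real.sin 0)).sub
      (VV_hasDerivAt_left (φ := 0) (abs_lt.2 ⟨by linarith [hr.1], hr.2⟩))
    refine this.congr_deriv ?_
    simp
  have hc : ContinuousOn (fun r => FF α 0 r 0) (Icc 0 1) :=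
    (Continuous.continuousOn (by fun_prop)).sub (VV_left_continuousOn 0)
  have hm := PP_strictMonoOn
  have h1 : StrictMonoOn (fun r => FF α 0 r 0) (Icc 0 r0) := by
    refine strictMonoOn_of_deriv_pos (convex_Icc _ _)
      (hc.mono (Icc_subset_Icc le_rfl hr01.le)) fun r hr => ?_
    rw [interior_Icc] at hr
    rw [(hd r ⟨hr.1, hr.2.trans hr01⟩).deriv, sub_pos, ← he]
    exact hm ⟨hr.1.le, hr.2.trans hr01⟩ ⟨hr0.1.le, hr01⟩ hr.2
  have h2 : StrictAntiOn (fun r => FF α 0 r 0) (Icc r0 1) := by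
    refine strictAntiOn_of_deriv_neg (convex_Icc _ _)
      (hc.mono (Icc_subset_Icc hr0.1.le le_rfl)) fun r hr => ?_
    rw [interior_Icc] at hr
    rw [(hd r ⟨hr0.1.trans hr.1, hr.2⟩).deriv, sub_neg, ← he]
    exact hm ⟨hr0.1.le, hr01⟩ ⟨hr0.1.le.trans hr.1.le, hr.2⟩ hr.1
  refine ⟨r0, ⟨hr0.1, hr01⟩, he, fun r hr hne => ?_⟩
  rcases lt_or_gt_of_ne hne with h | h
  · exact h1 ⟨hr.1, h.le⟩ ⟨hr0.1.le, le_rfl⟩ h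
  · exact h2 ⟨le_rfl, hr01.le⟩ ⟨h.le, hr.2⟩ h

/-- First component of the gradient of `V` in the frame rotated so that `φ = 0` is the first
axis. -/
noncomputable def P1 (r φ : ℝ) : ℝ := PP r φ * Real.cos φ - QQ r φ * Real.sin φ

/-- Second component of the gradient of `V` in the rotated frame. -/
noncomputable def P2 (r φ : ℝ) : ℝ := PP r φ * Real.sin φ + QQ r φ * Real.cos φ

/-- The radial derivative of `P1`. -/
noncomputable def DD (r φ : ℝ) : ℝ := NN r φ * Real.cos φ + GG r φ / r * Real.sin φ

/-- The radial derivative of `P2`. -/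
noncomputable def BB (r φ : ℝ) : ℝ := NN r φ * Real.sin φ - GG r φ / r * Real.cos φ

lemma cos_snd_hasFDerivAt (q : ℝ × ℝ) : HasFDerivAt (fun q : ℝ × ℝ => Real.cos q.2)
    ((-Real.sin q.2) • ContinuousLinearMap.snd ℝ ℝ ℝ) q :=
  (Real.hasDerivAt_cos q.2).comp_hasFDerivAt q hasFDerivAt_snd

lemma sin_snd_hasFDerivAt (q : ℝ × ℝ) : HasFDerivAt (fun q : ℝ × ℝ => Real.sin q.2)
    ((Real.cos q.2) • ContinuousLinearMap.snd ℝ ℝ ℝ) q :=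
  (Real.hasDerivAt_sin q.2).comp_hasFDerivAt q hasFDerivAt_snd

lemma P1_hasFDerivAt {r φ : ℝ} (hr0 : 0 < r) (hr : r < 1) :
    HasFDerivAt (fun q : ℝ × ℝ => P1 q.1 q.2) (DD r φ • ContinuousLinearMap.fst ℝ ℝ ℝ +
      (-(GG r φ * Real.cos φ)) • ContinuousLinearMap.snd ℝ ℝ ℝ) (r, φ) := by
  have hP := PP_hasFDerivAt (φ := φ) (abs_lt.2 ⟨by linarith, hr⟩)
  have hQ := QQ_hasFDerivAt (φ := φ) hr0 hr
  refine ((hP.mul (cos_snd_hasFDerivAt (r, φ))).sub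
    (hQ.mul (sin_snd_hasFDerivAt (r, φ)))).congr_fderiv ?_
  ext <;> simp [DD] <;> ring

lemma P2_hasFDerivAt {r φ : ℝ} (hr0 : 0 < r) (hr : r < 1) :
    HasFDerivAt (fun q : ℝ × ℝ => P2 q.1 q.2) (BB r φ • ContinuousLinearMap.fst ℝ ℝ ℝ +
      (-(GG r φ * Real.sin φ)) • ContinuousLinearMap.snd ℝ ℝ ℝ) (r, φ) := by
  have hP := PP_hasFDerivAt (φ := φ) (abs_lt.2 ⟨by linarith, hr⟩)
  have hQ := QQ_hasFDerivAt (φ := φ) hr0 hr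
  refine ((hP.mul (sin_snd_hasFDerivAt (r, φ))).add
    (hQ.mul (cos_snd_hasFDerivAt (r, φ)))).congr_fderiv ?_
  ext <;> simp [BB] <;> ring

/-- A closed box of half-size `η` around `(r₀, 0)` on which `V` is strictly convex in `r`. -/
structure Box (r0 η : ℝ) : Prop where
  pos : 0 < η
  left : 0 < r0 - η
  right : r0 + η < 1
  small : η < π / 4
  conv : ∀ r φ, |r - r0| ≤ η → |φ| ≤ η → 0 < NN r φ

lemma exists_box {r0 : ℝ} (h : r0 ∈ Ioo (0 : ℝ) 1) : ∃ η, Box r0 η := by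
  have hpi := Real.pi_pos
  have hN : ∀ᶠ q : ℝ × ℝ in 𝓝 (r0, 0), 0 < NN q.1 q.2 :=
    (NN_continuousOn.continuousAt (isOpen_strip.mem_nhds
      (show |r0| < 1 from abs_lt.2 ⟨by linarith [h.1], h.2⟩))).eventually
      (lt_mem_nhds (NN_pos h.1 h.2))
  obtain ⟨ε, hε, hb⟩ := Metric.eventually_nhds_iff.1 hN
  have h1 : 0 < min (ε / 2) (min (r0 / 2) (min ((1 - r0) / 2) (π / 8))) := by
    refine lt_min (by linarith) (lt_min (by linarith [h.1]) (lt_min (by linarith [h.2]) ?_))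
    linarith
  set η := min (ε / 2) (min (r0 / 2) (min ((1 - r0) / 2) (π / 8))) with hη
  have e1 : η ≤ ε / 2 := min_le_left _ _
  have e2 : η ≤ r0 / 2 := (min_le_right _ _).trans (min_le_left _ _)
  have e3 : η ≤ (1 - r0) / 2 :=
    (min_le_right _ _).trans ((min_le_right _ _).trans (min_le_left _ _))
  have e4 : η ≤ π / 8 := (min_le_right _ _).trans ((min_le_right _ _).trans (min_le_right _ _))
  refine ⟨η, h1, by linarith [h.1], by linarith [h.2], by linarith, fun r φ hr hφ => ?_⟩
  refine hb (y := (r, φ)) ?_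
  rw [Prod.dist_eq, max_lt_iff, Real.dist_eq, Real.dist_eq, sub_zero]
  constructor <;> simp only <;> linarith

namespace Box

variable {r0 η : ℝ}

lemma r_mem (hB : Box r0 η) {r : ℝ} (hr : |r - r0| ≤ η) : 0 < r ∧ r < 1 := by
  have := abs_le.1 hr
  constructor <;> linarith [hB.left, hB.right]

lemma GG_strictMonoOn (hB : Box r0 η) {r : ℝ} (hr : |r - r0| ≤ η) :
    StrictMonoOn (fun φ => GG r φ) (Icc (-η) η) := by
  obtain ⟨h0, h1⟩ := hB.r_mem hr
  have hr' : |r| < 1 := abs_lt.2 ⟨by linarith, h1⟩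
  refine strictMonoOn_of_deriv_pos (convex_Icc _ _)
    (fun φ _ => (GG_hasDerivAt hr' φ).continuousAt.continuousWithinAt) fun φ hφ => ?_
  rw [interior_Icc] at hφ
  rw [(GG_hasDerivAt hr' φ).deriv]
  exact mul_pos h0 (hB.conv r φ hr (abs_le.2 ⟨hφ.1.le, hφ.2.le⟩))

lemma GG_pos (hB : Box r0 η) {r φ : ℝ} (hr : |r - r0| ≤ η) (hφ : |φ| ≤ η) (h : 0 < φ) :
    0 < GG r φ := by
  have := hB.GG_strictMonoOn hr ⟨by linarith [hB.pos], hB.pos.le⟩ (abs_le.1 hφ) h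
  simpa [GG_zero] using this

lemma GG_neg (hB : Box r0 η) {r φ : ℝ} (hr : |r - r0| ≤ η) (hφ : |φ| ≤ η) (h : φ < 0) :
    GG r φ < 0 := by
  have := hB.GG_strictMonoOn hr (abs_le.1 hφ) ⟨by linarith [hB.pos], hB.pos.le⟩ h
  simpa [GG_zero] using this

lemma GG_ne (hB : Box r0 η) {r φ : ℝ} (hr : |r - r0| ≤ η) (hφ : |φ| ≤ η) (h : φ ≠ 0) :
    GG r φ ≠ 0 := by
  rcases lt_or_gt_of_ne h with h | h
  · exact (hB.GG_neg hr hφ h).ne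
  · exact (hB.GG_pos hr hφ h).ne'

lemma GG_sin_nonneg (hB : Box r0 η) {r φ : ℝ} (hr : |r - r0| ≤ η) (hφ : |φ| ≤ η) :
    0 ≤ GG r φ * Real.sin φ := by
  have h1 := abs_le.1 hφ
  have h2 := hB.small
  have hpi := Real.pi_pos
  rcases lt_trichotomy φ 0 with h | h | h
  · exact mul_nonneg_of_nonpos_of_nonpos (hB.GG_neg hr hφ h).le
      (Real.sin_nonpos_of_nonpos_of_neg_pi_le h.le (by linarith))
  · simp [h]
  · exact mul_nonneg (hB.GG_pos hr hφ h).le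
      (Real.sin_nonneg_of_nonneg_of_le_pi h.le (by linarith))

lemma cos_pos (hB : Box r0 η) {φ : ℝ} (hφ : |φ| ≤ η) : 0 < Real.cos φ := by
  have h1 := abs_le.1 hφ
  have h2 := hB.small
  have hpi := Real.pi_pos
  exact Real.cos_pos_of_mem_Ioo ⟨by linarith, by linarith⟩

lemma DD_pos (hB : Box r0 η) {r φ : ℝ} (hr : |r - r0| ≤ η) (hφ : |φ| ≤ η) : 0 < DD r φ := by
  have h1 := mul_pos (hB.conv r φ hr hφ) (hB.cos_pos hφ)
  have h2 := div_nonneg (hB.GG_sin_nonneg hr hφ) (hB.r_mem hr).1.le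
  unfold DD
  rw [div_mul_eq_mul_div]
  linarith

end Box

/-! ### The gradient map as a local diffeomorphism -/

/-- The linear map of the plane with matrix `!![a, b; c, d]`. -/
noncomputable def mat (a b c d : ℝ) : ℝ × ℝ →L[ℝ] ℝ × ℝ :=
  a • (ContinuousLinearMap.inl ℝ ℝ ℝ ∘L ContinuousLinearMap.fst ℝ ℝ ℝ) +
  b • (ContinuousLinearMap.inl ℝ ℝ ℝ ∘L ContinuousLinearMap.snd ℝ ℝ ℝ) +
  c • (ContinuousLinearMap.inr ℝ ℝ ℝ ∘L ContinuousLinearMap.fst ℝ ℝ ℝ) +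
  d • (ContinuousLinearMap.inr ℝ ℝ ℝ ∘L ContinuousLinearMap.snd ℝ ℝ ℝ)

lemma mat_apply (a b c d : ℝ) (q : ℝ × ℝ) :
    mat a b c d q = (a * q.1 + b * q.2, c * q.1 + d * q.2) := by
  simp [mat]

lemma mat_continuousAt {X : Type*} [TopologicalSpace X] {a b c d : X → ℝ} {x : X}
    (ha : ContinuousAt a x) (hb : ContinuousAt b x) (hc : ContinuousAt c x)
    (hd : ContinuousAt d x) : ContinuousAt (fun x => mat (a x) (b x) (c x) (d x)) x :=
  (((ha.smul continuousAt_const).add (hb.smul continuousAt_const)).add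
    (hc.smul continuousAt_const)).add (hd.smul continuousAt_const)

lemma div_mul_cross {Δ : ℝ} (p q x y : ℝ) :
    p / Δ * x + q / Δ * y = (p * x + q * y) / Δ := by ring

lemma mul_div_cross {Δ : ℝ} (a b p q p' q' : ℝ) {x y : ℝ} :
    a * (p / Δ * x + q / Δ * y) + b * (p' / Δ * x + q' / Δ * y) =
      (a * (p * x + q * y) + b * (p' * x + q' * y)) / Δ := by ring

/-- The invertible linear map with matrix `!![a, b; c, d]` of nonzero determinant. -/
noncomputable def matEquiv (a b c d : ℝ) (h : a * d - b * c ≠ 0) : (ℝ × ℝ) ≃L[ℝ] (ℝ × ℝ) :=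
  ContinuousLinearEquiv.equivOfInverse (mat a b c d)
    (mat (d / (a * d - b * c)) (-b / (a * d - b * c)) (-c / (a * d - b * c)) (a / (a * d - b * c)))
    (fun q => by
      simp only [mat_apply]
      ext
      · exact (div_mul_cross _ _ _ _).trans ((div_eq_iff h).2 (by ring))
      · exact (div_mul_cross _ _ _ _).trans ((div_eq_iff h).2 (by ring)))
    (fun q => by
      simp only [mat_apply]
      ext
      · exact (mul_div_cross _ _ _ _ _ _).trans ((div_eq_iff h).2 (by ring))
      · exact (mul_div_cross _ _ _ _ _ _).trans ((div_eq_iff h).2 (by ring)))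

lemma matEquiv_coe (a b c d : ℝ) (h : a * d - b * c ≠ 0) :
    (matEquiv a b c d h : ℝ × ℝ →L[ℝ] ℝ × ℝ) = mat a b c d := rfl

lemma matEquiv_symm_apply (a b c d : ℝ) (h : a * d - b * c ≠ 0) (q : ℝ × ℝ) :
    (matEquiv a b c d h).symm q =
      ((d * q.1 - b * q.2) / (a * d - b * c), (-c * q.1 + a * q.2) / (a * d - b * c)) := by
  have : (matEquiv a b c d h).symm q = mat (d / (a * d - b * c)) (-b / (a * d - b * c))
    (-c / (a * d - b * c)) (a / (a * d - b * c)) q := rfl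
  rw [this, mat_apply]
  ext <;> simp only <;> ring

lemma hasFDerivAt_pair {f g : ℝ × ℝ → ℝ} {a b c d : ℝ} {q : ℝ × ℝ}
    (hf : HasFDerivAt f (a • ContinuousLinearMap.fst ℝ ℝ ℝ + b • ContinuousLinearMap.snd ℝ ℝ ℝ) q)
    (hg : HasFDerivAt g (c • ContinuousLinearMap.fst ℝ ℝ ℝ + d • ContinuousLinearMap.snd ℝ ℝ ℝ) q) :
    HasFDerivAt (fun q => (f q, g q)) (mat a b c d) q := by
  refine (hf.prodMk hg).congr_fderiv ?_
  ext <;> simp [mat]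

section continuity

variable {r φ : ℝ}

lemma strip_mem (h0 : 0 < r) (h1 : r < 1) : {q : ℝ × ℝ | |q.1| < 1} ∈ 𝓝 (r, φ) :=
  isOpen_strip.mem_nhds (show |r| < 1 from abs_lt.2 ⟨by linarith, h1⟩)

lemma PP_continuousAt (h0 : 0 < r) (h1 : r < 1) :
    ContinuousAt (fun q : ℝ × ℝ => PP q.1 q.2) (r, φ) :=
  PP_continuousOn.continuousAt (strip_mem h0 h1)

lemma NN_continuousAt (h0 : 0 < r) (h1 : r < 1) :
    ContinuousAt (fun q : ℝ × ℝ => NN q.1 q.2) (r, φ) :=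
  NN_continuousOn.continuousAt (strip_mem h0 h1)

lemma GG_continuousAt (h0 : 0 < r) (h1 : r < 1) :
    ContinuousAt (fun q : ℝ × ℝ => GG q.1 q.2) (r, φ) :=
  GG_continuousOn.continuousAt (strip_mem h0 h1)

lemma DD_continuousAt (h0 : 0 < r) (h1 : r < 1) :
    ContinuousAt (fun q : ℝ × ℝ => DD q.1 q.2) (r, φ) := by
  unfold DD
  exact ((NN_continuousAt h0 h1).mul (by fun_prop)).add
    (((GG_continuousAt h0 h1).div continuousAt_fst h0.ne').mul (by fun_prop))

lemma BB_continuousAt (h0 : 0 < r) (h1 : r < 1) :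
    ContinuousAt (fun q : ℝ × ℝ => BB q.1 q.2) (r, φ) := by
  unfold BB
  exact ((NN_continuousAt h0 h1).mul (by fun_prop)).sub
    (((GG_continuousAt h0 h1).div continuousAt_fst h0.ne').mul (by fun_prop))

end continuity

lemma eventually_unit {r φ : ℝ} (h0 : 0 < r) (h1 : r < 1) :
    ∀ᶠ q : ℝ × ℝ in 𝓝 (r, φ), 0 < q.1 ∧ q.1 < 1 :=
  (continuousAt_fst.eventually (lt_mem_nhds h0)).and (continuousAt_fst.eventually (gt_mem_nhds h1))

/-- `(r, φ) ↦ (P1, φ)`, used to solve `P1 = α` for `r`. -/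
noncomputable def gmap (q : ℝ × ℝ) : ℝ × ℝ := (P1 q.1 q.2, q.2)

lemma gmap_hasFDerivAt {r φ : ℝ} (h0 : 0 < r) (h1 : r < 1) :
    HasFDerivAt gmap (mat (DD r φ) (-(GG r φ * Real.cos φ)) 0 1) (r, φ) := by
  refine hasFDerivAt_pair (P1_hasFDerivAt h0 h1) (hasFDerivAt_snd.congr_fderiv ?_)
  simp

lemma gmap_hasStrictFDerivAt {r φ : ℝ} (h0 : 0 < r) (h1 : r < 1) :
    HasStrictFDerivAt gmap (mat (DD r φ) (-(GG r φ * Real.cos φ)) 0 1) (r, φ) := by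
  refine hasStrictFDerivAt_of_hasFDerivAt_of_continuousAt (𝕜 := ℝ) (x := (r, φ))
    (f' := fun q : ℝ × ℝ => mat (DD q.1 q.2) (-(GG q.1 q.2 * Real.cos q.2)) 0 1) ?_ ?_
  · filter_upwards [eventually_unit h0 h1] with q hq using gmap_hasFDerivAt hq.1 hq.2
  · exact mat_continuousAt (DD_continuousAt h0 h1)
      ((GG_continuousAt h0 h1).mul (by fun_prop)).neg continuousAt_const continuousAt_const

/-- The gradient map `(r, φ) ↦ (P1, P2)`. -/
noncomputable def Psi (q : ℝ × ℝ) : ℝ × ℝ := (P1 q.1 q.2, P2 q.1 q.2)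

lemma Psi_hasFDerivAt {r φ : ℝ} (h0 : 0 < r) (h1 : r < 1) :
    HasFDerivAt Psi (mat (DD r φ) (-(GG r φ * Real.cos φ)) (BB r φ) (-(GG r φ * Real.sin φ)))
      (r, φ) :=
  hasFDerivAt_pair (P1_hasFDerivAt h0 h1) (P2_hasFDerivAt h0 h1)

lemma Psi_hasStrictFDerivAt {r φ : ℝ} (h0 : 0 < r) (h1 : r < 1) :
    HasStrictFDerivAt Psi
      (mat (DD r φ) (-(GG r φ * Real.cos φ)) (BB r φ) (-(GG r φ * Real.sin φ))) (r, φ) := by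
  refine hasStrictFDerivAt_of_hasFDerivAt_of_continuousAt (𝕜 := ℝ) (x := (r, φ))
    (f' := fun q : ℝ × ℝ => mat (DD q.1 q.2) (-(GG q.1 q.2 * Real.cos q.2)) (BB q.1 q.2)
      (-(GG q.1 q.2 * Real.sin q.2))) ?_ ?_
  · filter_upwards [eventually_unit h0 h1] with q hq using Psi_hasFDerivAt hq.1 hq.2
  · exact mat_continuousAt (DD_continuousAt h0 h1)
      ((GG_continuousAt h0 h1).mul (by fun_prop)).neg (BB_continuousAt h0 h1)
      ((GG_continuousAt h0 h1).mul (by fun_prop)).neg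

lemma Psi_det {r φ : ℝ} : DD r φ * (-(GG r φ * Real.sin φ)) -
    (-(GG r φ * Real.cos φ)) * BB r φ = -(GG r φ ^ 2 / r) := by
  unfold DD BB
  linear_combination (-(GG r φ ^ 2 / r)) * Real.sin_sq_add_cos_sq φ

lemma P1_zero (r : ℝ) : P1 r 0 = PP r 0 := by simp [P1]

lemma P2_zero (r : ℝ) : P2 r 0 = 0 := by simp [P2, QQ_zero]

/-- Local solution `r = R α φ` of `P1 r φ = α`. -/
lemma Box.exists_R {r0 η : ℝ} (hB : Box r0 η) : ∃ δ > (0 : ℝ), ∃ R : ℝ → ℝ → ℝ,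
    ∀ α φ, |α - PP r0 0| < δ → |φ| < δ → |R α φ - r0| < η ∧ |φ| < η ∧ P1 (R α φ) φ = α ∧
      HasDerivAt (R α) (GG (R α φ) φ * Real.cos φ / DD (R α φ) φ) φ := by
  have hr0 : |r0 - r0| ≤ η := by simpa using hB.pos.le
  have hφ0 : |(0 : ℝ)| ≤ η := by simpa using hB.pos.le
  obtain ⟨h0, h1⟩ := hB.r_mem hr0
  have hD0 := hB.DD_pos hr0 hφ0
  have hs : HasStrictFDerivAt gmap (matEquiv (DD r0 0) (-(GG r0 0 * Real.cos 0)) 0 1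
    (by simpa using hD0.ne') : ℝ × ℝ →L[ℝ] ℝ × ℝ) (r0, 0) := gmap_hasStrictFDerivAt h0 h1
  set U : Set (ℝ × ℝ) := {q | |q.1 - r0| < η ∧ |q.2| < η} with hU
  have hUo : IsOpen U := by
    rw [hU, ofPred_and]
    exact (isOpen_lt (by fun_prop) (by fun_prop)).inter (isOpen_lt (by fun_prop) (by fun_prop))
  set e := (hs.toOpenPartialHomeomorph gmap).restrOpen U hUo with he
  have hee : ∀ q, e q = gmap q := fun q => rfl
  have hmem : ((r0, 0) : ℝ × ℝ) ∈ e.source :=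
    ⟨hs.mem_toOpenPartialHomeomorph_source, by simp [hU, hB.pos]⟩
  have hsrc : e.source ⊆ U := inter_subset_right
  have ht : e.target ∈ 𝓝 ((PP r0 0, 0) : ℝ × ℝ) := by
    have := e.open_target.mem_nhds (e.map_source hmem)
    rwa [hee, gmap, P1_zero] at this
  obtain ⟨δ, hδ, hball⟩ := Metric.mem_nhds_iff.1 ht
  refine ⟨δ, hδ, fun α φ => (e.symm (α, φ)).1, fun α φ hα hφ => ?_⟩
  have hin : (α, φ) ∈ e.target := hball (by
    rw [Metric.mem_ball, Prod.dist_eq, max_lt_iff, Real.dist_eq, Real.dist_eq, sub_zero]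
    exact ⟨hα, hφ⟩)
  have hri : gmap (e.symm (α, φ)) = (α, φ) := by rw [← hee]; exact e.right_inv hin
  have hq := hsrc (e.map_target hin)
  obtain ⟨r, φ', hrφ⟩ : ∃ r φ', e.symm (α, φ) = (r, φ') := ⟨_, _, rfl⟩
  rw [hrφ] at hri hq
  simp only [gmap, Prod.mk.injEq] at hri
  obtain ⟨hP, rfl⟩ := hri
  simp only [hrφ]
  refine ⟨hq.1, hq.2, hP, ?_⟩
  obtain ⟨k0, k1⟩ := hB.r_mem hq.1.le
  have hD := hB.DD_pos hq.1.le hq.2.le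
  have hd : DD r φ' * 1 - (-(GG r φ' * Real.cos φ')) * 0 ≠ 0 := by simpa using hD.ne'
  have hsym : HasFDerivAt e.symm ((matEquiv (DD r φ') (-(GG r φ' * Real.cos φ')) 0 1 hd).symm :
      ℝ × ℝ →L[ℝ] ℝ × ℝ) (α, φ') := by
    refine e.hasFDerivAt_symm hin ?_
    rw [hrφ]
    exact gmap_hasFDerivAt k0 k1
  have := (hasFDerivAt_fst (p := e.symm (α, φ'))).comp_hasDerivAt φ' (hsym.comp_hasDerivAt φ'
    ((hasDerivAt_const φ' α).prodMk (hasDerivAt_id φ')))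
  refine this.congr_deriv ?_
  simp [matEquiv_symm_apply]

/-! ### Curves along which the first gradient component is constant -/

/-- A box together with a local solution `R` of `P1 (R α φ) φ = α` on a square of half-size `δ`. -/
structure RData (r0 η δ : ℝ) (R : ℝ → ℝ → ℝ) : Prop where
  box : Box r0 η
  pos : 0 < δ
  spec : ∀ α φ, |α - PP r0 0| < δ → |φ| < δ → |R α φ - r0| < η ∧ |φ| < η ∧ P1 (R α φ) φ = α ∧
      HasDerivAt (R α) (GG (R α φ) φ * Real.cos φ / DD (R α φ) φ) φ

lemma exists_RData {r0 : ℝ} (h : r0 ∈ Ioo (0 : ℝ) 1) : ∃ η δ R, RData r0 η δ R := by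
  obtain ⟨η, hη⟩ := exists_box h
  obtain ⟨δ, hδ, R, hR⟩ := hη.exists_R
  exact ⟨η, δ, R, hη, hδ, hR⟩

lemma PP_eq (r φ : ℝ) : PP r φ = P1 r φ * Real.cos φ + P2 r φ * Real.sin φ := by
  unfold P1 P2
  linear_combination (-PP r φ) * Real.sin_sq_add_cos_sq φ

lemma QQ_eq' (r φ : ℝ) : QQ r φ = -P1 r φ * Real.sin φ + P2 r φ * Real.cos φ := by
  unfold P1 P2
  linear_combination (-QQ r φ) * Real.sin_sq_add_cos_sq φ

lemma FF_hasFDerivAt {α s r φ : ℝ} (hr : |r| < 1) :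
    HasFDerivAt (fun q : ℝ × ℝ => FF α s q.1 q.2)
      ((α * Real.cos φ + s * Real.sin φ - PP r φ) • ContinuousLinearMap.fst ℝ ℝ ℝ +
        (r * (-α * Real.sin φ + s * Real.cos φ - QQ r φ)) • ContinuousLinearMap.snd ℝ ℝ ℝ)
      (r, φ) := by
  have h1 := ((cos_snd_hasFDerivAt (r, φ)).const_mul α).add
    ((sin_snd_hasFDerivAt (r, φ)).const_mul s)
  refine (((hasFDerivAt_fst (p := (r, φ))).mul h1).sub (VV_hasFDerivAt hr)).congr_fderiv ?_
  ext
  · simp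
  · simp; ring

lemma strictAntiOn_Ioo_of_deriv {f f' : ℝ → ℝ} {δ c : ℝ} (hc : c ∈ Ioo (-δ) δ)
    (hd : ∀ x ∈ Ioo (-δ) δ, HasDerivAt f (f' x) x) (hneg : ∀ x ∈ Ioo (-δ) δ, x ≠ c → f' x < 0) :
    StrictAntiOn f (Ioo (-δ) δ) := by
  have h1 : StrictAntiOn f (Ioc (-δ) c) := by
    refine strictAntiOn_of_deriv_neg (convex_Ioc _ _)
      (fun x hx => (hd x ⟨hx.1, hx.2.trans_lt hc.2⟩).continuousAt.continuousWithinAt) fun x hx => ?_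
    rw [interior_Ioc] at hx
    rw [(hd x ⟨hx.1, hx.2.trans hc.2⟩).deriv]
    exact hneg x ⟨hx.1, hx.2.trans hc.2⟩ hx.2.ne
  have h2 : StrictAntiOn f (Ico c δ) := by
    refine strictAntiOn_of_deriv_neg (convex_Ico _ _)
      (fun x hx => (hd x ⟨hc.1.trans_le hx.1, hx.2⟩).continuousAt.continuousWithinAt) fun x hx => ?_
    rw [interior_Ico] at hx
    rw [(hd x ⟨hc.1.trans hx.1, hx.2⟩).deriv]
    exact hneg x ⟨hc.1.trans hx.1, hx.2⟩ hx.1.ne'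
  have := h1.union h2 (c := c) ⟨⟨hc.1, le_rfl⟩, fun x hx => hx.2⟩ ⟨⟨le_rfl, hc.2⟩, fun x hx => hx.1⟩
  rwa [Ioc_union_Ico_eq_Ioo hc.1 hc.2] at this

lemma Box.P1_injOn {r0 η r r' φ : ℝ} (hB : Box r0 η) (hφ : |φ| ≤ η) (hr : |r - r0| ≤ η)
    (hr' : |r' - r0| ≤ η) (h : P1 r φ = P1 r' φ) : r = r' := by
  have hm : StrictMonoOn (fun r => P1 r φ) (Icc (r0 - η) (r0 + η)) := by
    have hd : ∀ x ∈ Icc (r0 - η) (r0 + η), HasDerivAt (fun r => P1 r φ) (DD x φ) x := by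
      intro x hx
      obtain ⟨h0, h1⟩ := hB.r_mem (abs_le.2 ⟨by linarith [hx.1], by linarith [hx.2]⟩ : |x - r0| ≤ η)
      have := (P1_hasFDerivAt (φ := φ) h0 h1).comp_hasDerivAt x
        ((hasDerivAt_id x).prodMk (hasDerivAt_const x φ))
      refine this.congr_deriv ?_
      simp
    refine strictMonoOn_of_deriv_pos (convex_Icc _ _)
      (fun x hx => (hd x hx).continuousAt.continuousWithinAt) fun x hx => ?_
    rw [interior_Icc] at hx
    rw [(hd x (Ioo_subset_Icc_self hx)).deriv]
    exact hB.DD_pos (abs_le.2 ⟨by linarith [hx.1], by linarith [hx.2]⟩) hφ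
  have a1 := abs_le.1 hr
  have a2 := abs_le.1 hr'
  exact hm.injOn ⟨by linarith, by linarith⟩ ⟨by linarith, by linarith⟩ h

/-- On the box `V(·, φ)` is convex, so `r₁` maximises `r ↦ F(r, φ₁)` for the parameters for which
`(r₁, φ₁)` is critical. -/
lemma Box.FF_le {r0 η r r1 φ : ℝ} (hB : Box r0 η) (hφ : |φ| ≤ η) (hr : |r - r0| ≤ η)
    (hr1 : |r1 - r0| ≤ η) :
    FF (P1 r1 φ) (P2 r1 φ) r φ ≤ FF (P1 r1 φ) (P2 r1 φ) r1 φ := by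
  have hu : ∀ x ∈ Icc (r0 - η) (r0 + η), |x| < 1 := by
    intro x hx
    obtain ⟨h0, h1⟩ := hB.r_mem (abs_le.2 ⟨by linarith [hx.1], by linarith [hx.2]⟩ : |x - r0| ≤ η)
    exact abs_lt.2 ⟨by linarith, h1⟩
  have hm : StrictMonoOn (fun r => PP r φ) (Icc (r0 - η) (r0 + η)) := by
    refine strictMonoOn_of_deriv_pos (convex_Icc _ _)
      (fun x hx => (PP_hasDerivAt_left (hu x hx)).continuousAt.continuousWithinAt) fun x hx => ?_
    rw [interior_Icc] at hx
    rw [(PP_hasDerivAt_left (hu x (Ioo_subset_Icc_self hx))).deriv]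
    exact hB.conv _ _ (abs_le.2 ⟨by linarith [hx.1], by linarith [hx.2]⟩) hφ
  have hd : ∀ x ∈ Icc (r0 - η) (r0 + η),
      HasDerivAt (fun x => FF (P1 r1 φ) (P2 r1 φ) x φ) (PP r1 φ - PP x φ) x := by
    intro x hx
    have := (FF_hasFDerivAt (α := P1 r1 φ) (s := P2 r1 φ) (φ := φ) (hu x hx)).comp_hasDerivAt x
      ((hasDerivAt_id x).prodMk (hasDerivAt_const x φ))
    refine this.congr_deriv ?_
    rw [← PP_eq]
    simp
  have a1 := abs_le.1 hr
  have a2 := abs_le.1 hr1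
  have m1 : r1 ∈ Icc (r0 - η) (r0 + η) := ⟨by linarith, by linarith⟩
  rcases le_total r r1 with h | h
  · refine monotoneOn_of_deriv_nonneg (convex_Icc (r0 - η) r1)
      (f := fun x => FF (P1 r1 φ) (P2 r1 φ) x φ) ?_ ?_ ?_ ⟨by linarith, h⟩ ⟨m1.1, le_rfl⟩ h
    · exact fun x hx => (hd x ⟨hx.1, hx.2.trans m1.2⟩).continuousAt.continuousWithinAt
    · rw [interior_Icc]
      exact fun x hx => (hd x ⟨hx.1.le, hx.2.le.trans m1.2⟩).differentiableAt.differentiableWithinAt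
    · rw [interior_Icc]
      intro x hx
      have hx' : x ∈ Icc (r0 - η) (r0 + η) := ⟨hx.1.le, hx.2.le.trans m1.2⟩
      rw [(hd x hx').deriv, sub_nonneg]
      exact hm.monotoneOn hx' m1 hx.2.le
  · refine antitoneOn_of_deriv_nonpos (convex_Icc r1 (r0 + η))
      (f := fun x => FF (P1 r1 φ) (P2 r1 φ) x φ) ?_ ?_ ?_ ⟨le_rfl, m1.2⟩ ⟨h, by linarith⟩ h
    · exact fun x hx => (hd x ⟨m1.1.trans hx.1, hx.2⟩).continuousAt.continuousWithinAt
    · rw [interior_Icc]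
      exact fun x hx => (hd x ⟨m1.1.trans hx.1.le, hx.2.le⟩).differentiableAt.differentiableWithinAt
    · rw [interior_Icc]
      intro x hx
      have hx' : x ∈ Icc (r0 - η) (r0 + η) := ⟨m1.1.trans hx.1.le, hx.2.le⟩
      rw [(hd x hx').deriv, sub_nonpos]
      exact hm.monotoneOn m1 hx' hx.1.le

namespace RData

variable {r0 η δ : ℝ} {R : ℝ → ℝ → ℝ}

lemma S_hasDerivAt (hD : RData r0 η δ R) {α φ : ℝ} (hα : |α - PP r0 0| < δ) (hφ : |φ| < δ) :
    HasDerivAt (fun x => P2 (R α x) x)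
      (-(GG (R α φ) φ ^ 2 / (R α φ * DD (R α φ) φ))) φ := by
  obtain ⟨h1, h2, -, h4⟩ := hD.spec α φ hα hφ
  obtain ⟨k0, k1⟩ := hD.box.r_mem h1.le
  have hDp := hD.box.DD_pos h1.le h2.le
  have := (P2_hasFDerivAt (φ := φ) k0 k1).comp_hasDerivAt φ
      (f := fun x => (R α x, x)) (h4.prodMk (hasDerivAt_id φ))
  refine this.congr_deriv ?_
  have hdet := Psi_det (r := R α φ) (φ := φ)
  have e : -(GG (R α φ) φ ^ 2 / (R α φ * DD (R α φ) φ)) =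
      -(GG (R α φ) φ ^ 2 / R α φ) / DD (R α φ) φ := by field_simp
  rw [e, ← hdet]
  simp
  field_simp
  ring

/-- The second component of the gradient decreases strictly along the curves `P1 = α`. -/
lemma S_strictAntiOn (hD : RData r0 η δ R) {α : ℝ} (hα : |α - PP r0 0| < δ) :
    StrictAntiOn (fun x => P2 (R α x) x) (Ioo (-δ) δ) := by
  refine strictAntiOn_Ioo_of_deriv (c := 0) ⟨by linarith [hD.pos], hD.pos⟩
    (fun x hx => hD.S_hasDerivAt hα (abs_lt.2 hx)) fun x hx hx0 => ?_
  obtain ⟨h1, h2, -, h4⟩ := hD.spec α x hα (abs_lt.2 hx)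
  obtain ⟨k0, k1⟩ := hD.box.r_mem h1.le
  have hDp := hD.box.DD_pos h1.le h2.le
  have := hD.box.GG_ne h1.le h2.le hx0
  have : 0 < GG (R α x) x ^ 2 / (R α x * DD (R α x) x) := by positivity
  linarith

lemma h_hasDerivAt (hD : RData r0 η δ R) {α φ : ℝ} (s : ℝ) (hα : |α - PP r0 0| < δ)
    (hφ : |φ| < δ) :
    ∃ k > 0, HasDerivAt (fun x => FF α s (R α x) x) ((s - P2 (R α φ) φ) * k) φ := by
  obtain ⟨h1, h2, h3, h4⟩ := hD.spec α φ hα hφ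
  obtain ⟨k0, k1⟩ := hD.box.r_mem h1.le
  have hDp := hD.box.DD_pos h1.le h2.le
  refine ⟨GG (R α φ) φ * Real.cos φ / DD (R α φ) φ * Real.sin φ + R α φ * Real.cos φ, ?_, ?_⟩
  · have c0 := hD.box.cos_pos h2.le
    have g0 := hD.box.GG_sin_nonneg h1.le h2.le
    have : 0 ≤ GG (R α φ) φ * Real.sin φ * (Real.cos φ / DD (R α φ) φ) := by positivity
    have e : GG (R α φ) φ * Real.cos φ / DD (R α φ) φ * Real.sin φ =
      GG (R α φ) φ * Real.sin φ * (Real.cos φ / DD (R α φ) φ) := by ring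
    rw [e]
    positivity
  · have := (FF_hasFDerivAt (α := α) (s := s) (r := R α φ) (φ := φ)
      (abs_lt.2 ⟨by linarith, k1⟩)).comp_hasDerivAt φ
      (f := fun x => (R α x, x)) (h4.prodMk (hasDerivAt_id φ))
    refine this.congr_deriv ?_
    rw [PP_eq (R α φ) φ, QQ_eq' (R α φ) φ, h3]
    simp
    ring

/-- Along the curve `P1 = α` the value `F` has a strict minimum at the angle where `P2 = s`. -/
lemma FF_lt (hD : RData r0 η δ R) {α φ φ1 : ℝ} (hα : |α - PP r0 0| < δ)
    (hφ : |φ| < δ) (hφ1 : |φ1| < δ) (hne : φ ≠ φ1) :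
    FF α (P2 (R α φ1) φ1) (R α φ1) φ1 < FF α (P2 (R α φ1) φ1) (R α φ) φ := by
  have hS := hD.S_strictAntiOn hα
  have hc : ∀ x ∈ Ioo (-δ) δ, ContinuousAt (fun x => FF α (P2 (R α φ1) φ1) (R α x) x) x :=
    fun x hx => by
      obtain ⟨k, -, h⟩ := hD.h_hasDerivAt (P2 (R α φ1) φ1) hα (abs_lt.2 hx)
      exact h.continuousAt
  have hφ' := abs_lt.1 hφ
  have hφ1' := abs_lt.1 hφ1
  rcases lt_or_gt_of_ne hne with h | h
  · refine strictAntiOn_of_deriv_neg (convex_Icc φ φ1)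
      (f := fun x => FF α (P2 (R α φ1) φ1) (R α x) x) (fun x hx => (hc x
        ⟨hφ'.1.trans_le hx.1, hx.2.trans_lt hφ1'.2⟩).continuousWithinAt) (fun x hx => ?_)
      ⟨le_rfl, h.le⟩ ⟨h.le, le_rfl⟩ h
    rw [interior_Icc] at hx
    have hx' : x ∈ Ioo (-δ) δ := ⟨hφ'.1.trans hx.1, hx.2.trans hφ1'.2⟩
    obtain ⟨k, hk, h⟩ := hD.h_hasDerivAt (P2 (R α φ1) φ1) hα (abs_lt.2 hx')
    rw [h.deriv]
    have := hS hx' hφ1' hx.2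
    exact mul_neg_of_neg_of_pos (sub_neg.2 this) hk
  · refine strictMonoOn_of_deriv_pos (convex_Icc φ1 φ)
      (f := fun x => FF α (P2 (R α φ1) φ1) (R α x) x) (fun x hx => (hc x
        ⟨hφ1'.1.trans_le hx.1, hx.2.trans_lt hφ'.2⟩).continuousWithinAt) (fun x hx => ?_)
      ⟨le_rfl, h.le⟩ ⟨h.le, le_rfl⟩ h
    rw [interior_Icc] at hx
    have hx' : x ∈ Ioo (-δ) δ := ⟨hφ1'.1.trans hx.1, hx.2.trans hφ'.2⟩
    obtain ⟨k, hk, h⟩ := hD.h_hasDerivAt (P2 (R α φ1) φ1) hα (abs_lt.2 hx')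
    rw [h.deriv]
    have := hS hφ1' hx' hx.1
    exact mul_pos (sub_pos.2 this) hk

lemma R_eq (hD : RData r0 η δ R) {r φ : ℝ} (hα : |P1 r φ - PP r0 0| < δ) (hφ : |φ| < δ)
    (hr : |r - r0| ≤ η) : R (P1 r φ) φ = r := by
  obtain ⟨h1, h2, h3, -⟩ := hD.spec _ φ hα hφ
  exact hD.box.P1_injOn h2.le h1.le hr h3

end RData

/-! ### The min-max is the Legendre transform near `(r₀, 0)` -/

lemma FF_neg (α r φ : ℝ) : FF α 0 r (-φ) = FF α 0 r φ := by
  simp [FF, VV_neg]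

namespace RData

variable {r0 η δ : ℝ} {R : ℝ → ℝ → ℝ}

lemma abs_sub_self_le (hD : RData r0 η δ R) : |r0 - r0| ≤ η := by simpa using hD.box.pos.le

lemma R_zero (hD : RData r0 η δ R) : R (PP r0 0) 0 = r0 := by
  have := hD.R_eq (r := r0) (φ := 0) (by simpa [P1_zero] using hD.pos) (by simpa using hD.pos)
    hD.abs_sub_self_le
  rwa [P1_zero] at this

lemma FF_lt_zero (hD : RData r0 η δ R) {φ : ℝ} (hφ : |φ| < δ) (h : φ ≠ 0) :
    FF (PP r0 0) 0 r0 0 < FF (PP r0 0) 0 (R (PP r0 0) φ) φ := by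
  have := hD.FF_lt (α := PP r0 0) (φ := φ) (φ1 := 0) (by simpa using hD.pos) hφ
    (by simpa using hD.pos) h
  rwa [hD.R_zero, P2_zero] at this

lemma R_mem (hD : RData r0 η δ R) {α φ : ℝ} (hα : |α - PP r0 0| < δ) (hφ : |φ| < δ) :
    R α φ ∈ Icc (0 : ℝ) 1 := by
  obtain ⟨h1, -, -, -⟩ := hD.spec α φ hα hφ
  obtain ⟨k0, k1⟩ := hD.box.r_mem h1.le
  exact ⟨k0.le, k1.le⟩

/-- On the diagonal the angle `φ = 0` is the strict global minimiser: otherwise the maximum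
principle on a strip `|φ| ≤ b` would contradict the strict local minimality. -/
lemma exists_FF_gt (hD : RData r0 η δ R) (hα : PP r0 0 < √2) {b : ℝ} (hb : 0 < b)
    (hb1 : b ≤ π / 4) :
    ∃ r ∈ Icc (0 : ℝ) 1, FF (PP r0 0) 0 r0 0 < FF (PP r0 0) 0 r b := by
  by_contra! hcon
  have hpi := Real.pi_pos
  have hη := hD.box
  have h0 : 0 < r0 - η := hη.left
  have hmp := max_principle (ρ := r0 - η) (b := b) (M := FF (PP r0 0) 0 r0 0) h0 hb
    (E := fun r φ => FF (PP r0 0) 0 r φ)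
    (Er := fun r φ => PP r0 0 * Real.cos φ - PP r φ)
    (E1 := fun r φ => -(r * PP r0 0 * Real.sin φ) - r * QQ r φ)
    (E2 := fun r φ => -(r * PP r0 0 * Real.cos φ) - r * -PP r φ) ?_ ?_ ?_ ?_ ?_ ?_ ?_
  · set t := min (δ / 2) b with ht
    have ht0 : 0 < t := lt_min (by linarith [hD.pos]) hb
    have htδ : |t| < δ := by
      rw [abs_of_pos ht0]; linarith [min_le_left (δ / 2) b, hD.pos]
    have h1 := hD.FF_lt_zero htδ ht0.ne'
    obtain ⟨k1, -, -, -⟩ := hD.spec (PP r0 0) t (by simpa using hD.pos) htδ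
    have h2 := hmp (R (PP r0 0) t) ⟨by linarith [(abs_lt.1 k1).1],
      (hD.R_mem (by simpa using hD.pos) htδ).2⟩ t ⟨by linarith, min_le_right _ _⟩
    linarith
  · unfold FF
    exact (Continuous.continuousOn (by fun_prop)).sub
      ((VV_continuousOn _).mono (prod_mono (Icc_subset_Icc h0.le le_rfl) subset_rfl))
  · intro r hr φ _
    have hr' : |r| < 1 := abs_lt.2 ⟨by linarith [hr.1], hr.2⟩
    have := ((hasDerivAt_id r).mul_const (PP r0 0 * Real.cos φ + 0 * Real.sin φ)).sub
      (VV_hasDerivAt_left (φ := φ) hr')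
    refine this.congr_deriv ?_
    ring
  · intro r hr φ _
    have hr' : |r| < 1 := abs_lt.2 ⟨by linarith [hr.1], hr.2⟩
    have := ((((Real.hasDerivAt_cos φ).const_mul (PP r0 0)).add
      ((Real.hasDerivAt_sin φ).const_mul 0)).const_mul r).sub (VV_hasDerivAt_right (φ := φ) hr')
    refine this.congr_deriv ?_
    ring
  · intro r hr φ _
    have := (((Real.hasDerivAt_sin φ).const_mul (r * PP r0 0)).neg).sub
      ((QQ_hasDerivAt_right (φ := φ) (h0.trans_le hr.1) hr.2).const_mul r)
    exact this
  · intro r hr φ _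
    apply le_of_eq; ring
  · intro φ hφ
    refine le_trans ?_ (hcon 1 (by simp))
    have hcos : Real.cos b ≤ Real.cos φ := by
      rw [← Real.cos_abs φ]
      exact Real.cos_le_cos_of_nonneg_of_le_pi (abs_nonneg _) (by linarith) (abs_le.2 hφ)
    simp only [FF, VV_one (φ := b) ⟨by linarith, hb1⟩,
      VV_one (φ := φ) ⟨by linarith [hφ.1], by linarith [hφ.2]⟩]
    nlinarith
  · intro r hr
    have := hcon r ⟨h0.le.trans hr.1, hr.2⟩
    exact ⟨by rw [FF_neg]; exact this, this⟩

lemma exists_FF_gt' (hD : RData r0 η δ R) (hα : PP r0 0 < √2) {φ : ℝ}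
    (hφ : φ ∈ Icc (-(π / 4)) (π / 4)) (h : φ ≠ 0) :
    ∃ r ∈ Icc (0 : ℝ) 1, FF (PP r0 0) 0 r0 0 < FF (PP r0 0) 0 r φ := by
  rcases lt_or_gt_of_ne h with h | h
  · obtain ⟨r, hr, hlt⟩ := hD.exists_FF_gt hα (b := -φ) (by linarith) (by linarith [hφ.1])
    exact ⟨r, hr, by rwa [FF_neg] at hlt⟩
  · exact hD.exists_FF_gt hα h hφ.2

end RData

/-- `F` at the critical parameters of `q`, with the radial variable truncated to `[0, 1]`. -/
noncomputable def FC (q : ℝ × ℝ) (r φ : ℝ) : ℝ :=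
  clamp r * (P1 q.1 q.2 * Real.cos φ + P2 q.1 q.2 * Real.sin φ) - VV (clamp r) φ

lemma FC_eq {q : ℝ × ℝ} {r φ : ℝ} (hr : r ∈ Icc (0 : ℝ) 1) :
    FC q r φ = FF (P1 q.1 q.2) (P2 q.1 q.2) r φ := by
  rw [FC, FF, clamp_of_mem hr]

lemma clamp_continuous : Continuous clamp := by unfold clamp; fun_prop

lemma FC_continuousAt {X : Type*} [TopologicalSpace X] {q : X → ℝ × ℝ} {r φ : X → ℝ} {x : X}
    (hq0 : 0 < (q x).1) (hq1 : (q x).1 < 1) (hq : ContinuousAt q x)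
    (hr : ContinuousAt r x) (hφ : ContinuousAt φ x) :
    ContinuousAt (fun x => FC (q x) (r x) (φ x)) x := by
  have h1 : ContinuousAt (fun x => Psi (q x)) x :=
    ContinuousAt.comp (g := Psi) (f := q)
      (Psi_hasFDerivAt (r := (q x).1) (φ := (q x).2) hq0 hq1).continuousAt hq
  have h2 : ContinuousAt (fun x => VV (clamp (r x)) (φ x)) x :=
    ContinuousAt.comp
      (g := fun q : ℝ × ℝ => VV (clamp q.1) q.2) (f := fun x => (r x, φ x))
      VV_clamp_continuous.continuousAt (hr.prodMk hφ)
  have h3 : ContinuousAt (fun x => clamp (r x)) x := clamp_continuous.continuousAt.comp hr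
  have h4 : ContinuousAt (fun x => Real.cos (φ x)) x := Real.continuous_cos.continuousAt.comp hφ
  have h5 : ContinuousAt (fun x => Real.sin (φ x)) x := Real.continuous_sin.continuousAt.comp hφ
  exact (h3.mul ((h1.fst.mul h4).add (h1.snd.mul h5))).sub h2

namespace RData

variable {r0 η δ : ℝ} {R : ℝ → ℝ → ℝ}

lemma r0_mem (hD : RData r0 η δ R) : 0 < r0 ∧ r0 < 1 := hD.box.r_mem hD.abs_sub_self_le

lemma eventually_near (hD : RData r0 η δ R) : ∀ᶠ q : ℝ × ℝ in 𝓝 (r0, 0),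
    |q.1 - r0| < η ∧ |q.2| < η ∧ |q.2| < δ ∧ |P1 q.1 q.2 - PP r0 0| < δ := by
  have h1 : ContinuousAt (fun q : ℝ × ℝ => |q.1 - r0|) (r0, 0) := by fun_prop
  have h2 : ContinuousAt (fun q : ℝ × ℝ => |q.2|) (r0, 0) := by fun_prop
  have h3 : ContinuousAt (fun q : ℝ × ℝ => |P1 q.1 q.2 - PP r0 0|) (r0, 0) :=
    ((P1_hasFDerivAt hD.r0_mem.1 hD.r0_mem.2).continuousAt.sub continuousAt_const).abs
  refine (h1.eventually (gt_mem_nhds (by simpa using hD.box.pos))).and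
    ((h2.eventually (gt_mem_nhds (by simpa using hD.box.pos))).and
    ((h2.eventually (gt_mem_nhds (by simpa using hD.pos))).and
    (h3.eventually (gt_mem_nhds (by simpa [P1_zero] using hD.pos)))))

/-- Near `(r₀, 0)` the radius `q.1` is a global maximiser of `r ↦ F(r, q.2)`. -/
lemma eventually_max (hD : RData r0 η δ R)
    (hmax : ∀ r ∈ Icc (0 : ℝ) 1, r ≠ r0 → FF (PP r0 0) 0 r 0 < FF (PP r0 0) 0 r0 0) :
    ∀ᶠ q : ℝ × ℝ in 𝓝 (r0, 0), ∀ r ∈ Icc (0 : ℝ) 1,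
      FF (P1 q.1 q.2) (P2 q.1 q.2) r q.2 ≤ FF (P1 q.1 q.2) (P2 q.1 q.2) q.1 q.2 := by
  obtain ⟨k0, k1⟩ := hD.r0_mem
  have hK : IsCompact (Icc (0 : ℝ) 1 \ Ioo (r0 - η) (r0 + η)) := isCompact_Icc.diff isOpen_Ioo
  have hfar : ∀ᶠ q : ℝ × ℝ in 𝓝 (r0, 0), ∀ r ∈ Icc (0 : ℝ) 1 \ Ioo (r0 - η) (r0 + η),
      FC q r q.2 < FC q q.1 q.2 := by
    refine hK.eventually_forall_of_forall_eventually
      (P := fun q r => FC q r q.2 < FC q q.1 q.2) fun r hr => ?_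
    have hlt : FC (r0, 0) r 0 < FC (r0, 0) r0 0 := by
      rw [FC_eq hr.1, FC_eq ⟨k0.le, k1.le⟩, P1_zero, P2_zero]
      refine hmax r hr.1 ?_
      rintro rfl
      exact hr.2 ⟨by linarith [hD.box.pos], by linarith [hD.box.pos]⟩
    have c1 : ContinuousAt (fun z : (ℝ × ℝ) × ℝ => FC z.1 z.2 z.1.2) ((r0, 0), r) :=
      FC_continuousAt k0 k1 (by fun_prop) (by fun_prop) (by fun_prop)
    have c2 : ContinuousAt (fun z : (ℝ × ℝ) × ℝ => FC z.1 z.1.1 z.1.2) ((r0, 0), r) :=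
      FC_continuousAt k0 k1 (by fun_prop) (by fun_prop) (by fun_prop)
    exact c1.eventually_lt c2 hlt
  filter_upwards [hfar, hD.eventually_near] with q hq hq' r hr
  by_cases hin : r ∈ Ioo (r0 - η) (r0 + η)
  · exact hD.box.FF_le hq'.2.1.le (abs_le.2 ⟨by linarith [hin.1], by linarith [hin.2]⟩) hq'.1.le
  · have h1 := hq r ⟨hr, hin⟩
    obtain ⟨j0, j1⟩ := hD.box.r_mem hq'.1.le
    rw [FC_eq hr, FC_eq ⟨j0.le, j1.le⟩] at h1
    exact h1.le

/-- Near `(r₀, 0)` the angle `q.2` is a global minimiser of `φ ↦ max_r F(r, φ)`. -/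
lemma eventually_min (hD : RData r0 η δ R) (hα : PP r0 0 < √2) :
    ∀ᶠ q : ℝ × ℝ in 𝓝 (r0, 0), ∀ φ ∈ Icc (-(π / 4)) (π / 4), ∃ r ∈ Icc (0 : ℝ) 1,
      FF (P1 q.1 q.2) (P2 q.1 q.2) q.1 q.2 ≤ FF (P1 q.1 q.2) (P2 q.1 q.2) r φ := by
  obtain ⟨k0, k1⟩ := hD.r0_mem
  have hK : IsCompact (Icc (-(π / 4)) (π / 4) \ Ioo (-δ) δ) := isCompact_Icc.diff isOpen_Ioo
  have hfar : ∀ᶠ q : ℝ × ℝ in 𝓝 (r0, 0), ∀ φ ∈ Icc (-(π / 4)) (π / 4) \ Ioo (-δ) δ,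
      ∃ r ∈ Icc (0 : ℝ) 1, FC q q.1 q.2 < FC q r φ := by
    refine hK.eventually_forall_of_forall_eventually
      (P := fun q φ => ∃ r ∈ Icc (0 : ℝ) 1, FC q q.1 q.2 < FC q r φ) fun φ hφ => ?_
    obtain ⟨r, hr, hlt⟩ := hD.exists_FF_gt' hα hφ.1 (by
      rintro rfl
      exact hφ.2 ⟨by linarith [hD.pos], hD.pos⟩)
    have hlt' : FC (r0, 0) r0 0 < FC (r0, 0) r φ := by
      rw [FC_eq hr, FC_eq ⟨k0.le, k1.le⟩, P1_zero, P2_zero]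
      exact hlt
    have c1 : ContinuousAt (fun z : (ℝ × ℝ) × ℝ => FC z.1 r z.2) ((r0, 0), φ) :=
      FC_continuousAt k0 k1 (by fun_prop) (by fun_prop) (by fun_prop)
    have c2 : ContinuousAt (fun z : (ℝ × ℝ) × ℝ => FC z.1 z.1.1 z.1.2) ((r0, 0), φ) :=
      FC_continuousAt k0 k1 (by fun_prop) (by fun_prop) (by fun_prop)
    exact (c2.eventually_lt c1 hlt').mono fun z hz => ⟨r, hr, hz⟩
  filter_upwards [hfar, hD.eventually_near] with q hq ⟨n1, n2, n3, n4⟩ φ hφ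
  obtain ⟨j0, j1⟩ := hD.box.r_mem n1.le
  by_cases hin : φ ∈ Ioo (-δ) δ
  · refine ⟨R (P1 q.1 q.2) φ, hD.R_mem n4 (abs_lt.2 hin), ?_⟩
    have hR := hD.R_eq n4 n3 n1.le
    rcases eq_or_ne φ q.2 with rfl | hne
    · rw [hR]
    · have := hD.FF_lt n4 (abs_lt.2 hin) n3 hne
      rw [hR] at this
      exact this.le
  · obtain ⟨r, hr, h1⟩ := hq φ ⟨hφ, hin⟩
    rw [FC_eq hr, FC_eq ⟨j0.le, j1.le⟩] at h1
    exact ⟨r, hr, h1.le⟩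

end RData

/-- `u` in coordinates along and across the diagonal. -/
noncomputable def uu (q : ℝ × ℝ) : ℝ := u ((q.1 - q.2) / √2) ((q.1 + q.2) / √2)

lemma rotate (α s φ : ℝ) : (α - s) / √2 * Real.cos (π / 4 + φ) + (α + s) / √2 *
    Real.sin (π / 4 + φ) = α * Real.cos φ + s * Real.sin φ := by
  rw [Real.cos_add, Real.sin_add, Real.cos_pi_div_four, Real.sin_pi_div_four]
  have : √2 ≠ 0 := by positivity
  field_simp
  ring

/-- A saddle point of `F` computes the min-max. -/
lemma uu_eq {α s r1 φ1 : ℝ} (hφ1 : φ1 ∈ Icc (-(π / 4)) (π / 4))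
    (h1 : ∀ r ∈ Icc (0 : ℝ) 1, FF α s r φ1 ≤ FF α s r1 φ1)
    (h2 : ∀ φ ∈ Icc (-(π / 4)) (π / 4), ∃ r ∈ Icc (0 : ℝ) 1, FF α s r1 φ1 ≤ FF α s r φ) :
    uu (α, s) = FF α s r1 φ1 := by
  have hterm : ∀ (θ : Icc (0 : ℝ) (π / 2)) (r : Icc (0 : ℝ) 1),
      (r : ℝ) * ((α - s) / √2 * Real.cos θ + (α + s) / √2 * Real.sin θ) - W r θ =
        FF α s r (θ - π / 4) := by
    intro θ r
    have := rotate α s (θ - π / 4)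
    rw [add_sub_cancel] at this
    rw [FF, VV_eq, add_sub_cancel, ← this]
  have hbdd : ∀ φ, BddAbove (range fun r : Icc (0 : ℝ) 1 => FF α s r φ) := by
    intro φ
    have hc : ContinuousOn (fun r => FF α s r φ) (Icc 0 1) :=
      (Continuous.continuousOn (by fun_prop)).sub (VV_left_continuousOn φ)
    have := isCompact_Icc.bddAbove_image hc
    rwa [image_eq_range] at this
  have : Nonempty (Icc (0 : ℝ) 1) := ⟨⟨0, by simp⟩⟩
  have : Nonempty (Icc (0 : ℝ) (π / 2)) := ⟨⟨0, le_rfl, by positivity⟩⟩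
  have hu : uu (α, s) = ⨅ θ : Icc (0 : ℝ) (π / 2), ⨆ r : Icc (0 : ℝ) 1,
      FF α s r (θ - π / 4) := by
    simp only [uu, u, hterm]
  rw [hu]
  refine le_antisymm ?_ ?_
  · have hθ : π / 4 + φ1 ∈ Icc (0 : ℝ) (π / 2) := ⟨by linarith [hφ1.1], by linarith [hφ1.2]⟩
    refine (ciInf_le ⟨0, ?_⟩ (⟨π / 4 + φ1, hθ⟩ : Icc (0 : ℝ) (π / 2))).trans ?_
    · rintro _ ⟨θ, rfl⟩
      refine le_trans (le_of_eq ?_) (le_ciSup (hbdd (θ - π / 4)) ⟨0, by simp⟩)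
      simp [FF, VV_zero_left]
    · refine ciSup_le fun r => ?_
      simp only [add_sub_cancel_left]
      exact h1 r r.2
  · refine le_ciInf fun θ => ?_
    obtain ⟨r, hr, hle⟩ := h2 (θ - π / 4) ⟨by linarith [θ.2.1], by linarith [θ.2.2]⟩
    exact hle.trans (le_ciSup (hbdd (θ - π / 4)) ⟨r, hr⟩)

/-- The Legendre transform `r V_r - V`, the value of `u` in polar gradient coordinates. -/
noncomputable def Leg (q : ℝ × ℝ) : ℝ := q.1 * PP q.1 q.2 - VV q.1 q.2

/-- The saddle value at `Psi q` is the Legendre transform at `q`. -/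
lemma RData.eventually_uu {r0 η δ : ℝ} {R : ℝ → ℝ → ℝ} (hD : RData r0 η δ R) (hα : PP r0 0 < √2)
    (hmax : ∀ r ∈ Icc (0 : ℝ) 1, r ≠ r0 → FF (PP r0 0) 0 r 0 < FF (PP r0 0) 0 r0 0) :
    ∀ᶠ q : ℝ × ℝ in 𝓝 (r0, 0), uu (Psi q) = Leg q := by
  filter_upwards [hD.eventually_max hmax, hD.eventually_min hα, hD.eventually_near] with q h1 h2 h3
  have h4 := abs_lt.1 h3.2.1
  have h5 := hD.box.small
  rw [Psi, uu_eq ⟨by linarith, by linarith⟩ h1 h2, FF, Leg, ← PP_eq]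

/-! ### The second derivative across the diagonal -/

/-- Points where `Psi` is a local diffeomorphism and `uu ∘ Psi` is the Legendre transform. -/
structure Good (q : ℝ × ℝ) : Prop where
  pos : 0 < q.1
  lt_one : q.1 < 1
  ne : GG q.1 q.2 ≠ 0
  leg : ∀ᶠ z in 𝓝 q, uu (Psi z) = Leg z

/-- The gradient of `uu` at `Psi q`, namely `q` in polar coordinates. -/
noncomputable def polar (q : ℝ × ℝ) : ℝ × ℝ →L[ℝ] ℝ :=
  (q.1 * Real.cos q.2) • ContinuousLinearMap.fst ℝ ℝ ℝ +
    (q.1 * Real.sin q.2) • ContinuousLinearMap.snd ℝ ℝ ℝ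

/-- The second derivative of `uu` in the second variable at `Psi q`. -/
noncomputable def kap (q : ℝ × ℝ) : ℝ :=
  -(q.1 * (GG q.1 q.2 * Real.sin q.2 * Real.cos q.2 + q.1 * Real.cos q.2 * DD q.1 q.2)) /
    GG q.1 q.2 ^ 2

lemma Leg_hasFDerivAt {r φ : ℝ} (h0 : 0 < r) (h1 : r < 1) :
    HasFDerivAt Leg ((polar (r, φ)).comp
      (mat (DD r φ) (-(GG r φ * Real.cos φ)) (BB r φ) (-(GG r φ * Real.sin φ)))) (r, φ) := by
  have hr : |r| < 1 := abs_lt.2 ⟨by linarith, h1⟩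
  refine (((hasFDerivAt_fst (p := (r, φ))).mul (PP_hasFDerivAt hr)).sub
    (VV_hasFDerivAt hr)).congr_fderiv ?_
  have hs := Real.sin_sq_add_cos_sq φ
  ext
  · simp [polar, mat_apply, DD, BB]
    linear_combination (-r * NN r φ) * hs
  · simp [polar, mat_apply]
    linear_combination (r * GG r φ) * hs

namespace Good

variable {q : ℝ × ℝ}

lemma eventually (h : Good q) : ∀ᶠ q' in 𝓝 q, Good q' := by
  filter_upwards [eventually_unit h.pos h.lt_one,
    (GG_continuousAt (φ := q.2) h.pos h.lt_one).eventually_ne h.ne,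
    eventually_eventually_nhds.2 h.leg] with q' h1 h2 h3
  exact ⟨h1.1, h1.2, h2, h3⟩

lemma det_ne (h : Good q) : DD q.1 q.2 * (-(GG q.1 q.2 * Real.sin q.2)) -
    (-(GG q.1 q.2 * Real.cos q.2)) * BB q.1 q.2 ≠ 0 := by
  rw [Psi_det]
  have := h.ne
  have := h.pos
  have : 0 < GG q.1 q.2 ^ 2 / q.1 := by positivity
  linarith

/-- Local inverse of `Psi` near a good point. -/
lemma exists_inverse (h : Good q) : ∃ g : ℝ × ℝ → ℝ × ℝ, g (Psi q) = q ∧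
    (∀ᶠ p in 𝓝 (Psi q), Psi (g p) = p) ∧
    HasFDerivAt g ((matEquiv _ _ _ _ h.det_ne).symm : ℝ × ℝ →L[ℝ] ℝ × ℝ) (Psi q) := by
  have hs : HasStrictFDerivAt Psi (matEquiv _ _ _ _ h.det_ne : ℝ × ℝ →L[ℝ] ℝ × ℝ) q :=
    Psi_hasStrictFDerivAt h.pos h.lt_one
  exact ⟨hs.localInverse Psi _ q, hs.localInverse_apply_image, hs.eventually_right_inverse,
    hs.to_localInverse.hasFDerivAt⟩

/-- Envelope theorem: the gradient of `uu` at `Psi q` is `q` in polar coordinates. -/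
lemma uu_hasFDerivAt (h : Good q) : HasFDerivAt uu (polar q) (Psi q) := by
  obtain ⟨g, hg, hr, hd⟩ := h.exists_inverse
  have hL := Leg_hasFDerivAt (r := q.1) (φ := q.2) h.pos h.lt_one
  rw [Prod.mk.eta, ← matEquiv_coe _ _ _ _ h.det_ne] at hL
  have hc := HasFDerivAt.comp (g := Leg) (Psi q) (by rw [hg]; exact hL) hd
  have ht : Tendsto g (𝓝 (Psi q)) (𝓝 q) := by
    have := hd.continuousAt.tendsto
    rwa [hg] at this
  have he : uu =ᶠ[𝓝 (Psi q)] Leg ∘ g := by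
    filter_upwards [hr, ht.eventually h.leg] with p h1 h2
    rw [h1] at h2
    exact h2
  refine (hc.congr_of_eventuallyEq he).congr_fderiv ?_
  refine ContinuousLinearMap.ext fun x => ?_
  simp

lemma eventually_differentiableAt (h : Good q) :
    ∀ᶠ p in 𝓝 (Psi q), DifferentiableAt ℝ uu p := by
  obtain ⟨g, hg, hr, hd⟩ := h.exists_inverse
  have ht : Tendsto g (𝓝 (Psi q)) (𝓝 q) := by
    have := hd.continuousAt.tendsto
    rwa [hg] at this
  filter_upwards [hr, ht.eventually h.eventually] with p h1 h2
  rw [← h1]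
  exact h2.uu_hasFDerivAt.differentiableAt

/-- Differentiate the second gradient component `r sin φ` through the local inverse of `Psi`. -/
lemma hasDerivAt_deriv (h : Good q) :
    HasDerivAt (deriv fun t => uu ((Psi q).1, t)) (kap q) (Psi q).2 := by
  obtain ⟨g, hg, hr, hd⟩ := h.exists_inverse
  have hcurve : HasDerivAt (fun t : ℝ => ((Psi q).1, t)) ((0 : ℝ), (1 : ℝ)) (Psi q).2 :=
    (hasDerivAt_const _ _).prodMk (hasDerivAt_id _)
  have ht : Tendsto g (𝓝 (Psi q)) (𝓝 q) := by
    have := hd.continuousAt.tendsto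
    rwa [hg] at this
  have he : (deriv fun t => uu ((Psi q).1, t)) =ᶠ[𝓝 (Psi q).2]
      fun t => (g ((Psi q).1, t)).1 * Real.sin (g ((Psi q).1, t)).2 := by
    have hev := hcurve.continuousAt.tendsto.eventually (hr.and (ht.eventually h.eventually))
    filter_upwards [hev] with t ⟨h1, h2⟩
    have h3 := h2.uu_hasFDerivAt
    rw [h1] at h3
    have := h3.comp_hasDerivAt t (f := fun t : ℝ => ((Psi q).1, t))
      ((hasDerivAt_const _ _).prodMk (hasDerivAt_id _))
    rw [show (fun t => uu ((Psi q).1, t)) = uu ∘ fun t => ((Psi q).1, t) from rfl, this.deriv]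
    simp [polar]
  refine HasDerivAt.congr_of_eventuallyEq ?_ he
  have hgt := hd.comp_hasDerivAt (Psi q).2 (f := fun t : ℝ => ((Psi q).1, t)) hcurve
  have h1 := (hasFDerivAt_fst (p := g (Psi q))).comp_hasDerivAt (Psi q).2 hgt
  have h2 := (hasFDerivAt_snd (p := g (Psi q))).comp_hasDerivAt (Psi q).2 hgt
  have h3 := h1.mul h2.sin
  refine h3.congr_deriv ?_
  simp only [Function.comp_apply, ContinuousLinearMap.coe_fst', ContinuousLinearMap.coe_snd',
    ContinuousLinearEquiv.coe_coe, matEquiv_symm_apply, Psi_det,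
    Prod.mk.eta, hg]
  have := h.ne
  have := h.pos
  unfold kap
  field_simp
  ring

end Good

namespace RData

variable {r0 η δ : ℝ} {R : ℝ → ℝ → ℝ}

lemma eventually_good (hD : RData r0 η δ R) (hα : PP r0 0 < √2)
    (hmax : ∀ r ∈ Icc (0 : ℝ) 1, r ≠ r0 → FF (PP r0 0) 0 r 0 < FF (PP r0 0) 0 r0 0) :
    ∀ᶠ q : ℝ × ℝ in 𝓝 (r0, 0), q.2 ≠ 0 → Good q := by
  filter_upwards [eventually_eventually_nhds.2 (hD.eventually_uu hα hmax),
    hD.eventually_near] with q h1 h2 h3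
  obtain ⟨j0, j1⟩ := hD.box.r_mem h2.1.le
  exact ⟨j0, j1, hD.box.GG_ne h2.1.le h2.2.1.le h3, h1⟩

/-- The second derivative is eventually below any `M`: the numerator of `kap` tends to
`-r₀² V_rr(r₀, 0) < 0` and the denominator `G²` tends to `0`. -/
lemma eventually_kap_le (hD : RData r0 η δ R) (M : ℝ) :
    ∀ᶠ q : ℝ × ℝ in 𝓝 (r0, 0), q.2 ≠ 0 → kap q ≤ M := by
  obtain ⟨k0, k1⟩ := hD.r0_mem
  have hG := GG_continuousAt (φ := 0) k0 k1
  have hDD := DD_continuousAt (φ := 0) k0 k1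
  have hs : ContinuousAt (fun q : ℝ × ℝ => Real.sin q.2) (r0, 0) := by fun_prop
  have hc : ContinuousAt (fun q : ℝ × ℝ => Real.cos q.2) (r0, 0) := by fun_prop
  have hcont : ContinuousAt (fun q : ℝ × ℝ => q.1 * (GG q.1 q.2 * Real.sin q.2 * Real.cos q.2 +
      q.1 * Real.cos q.2 * DD q.1 q.2) + M * GG q.1 q.2 ^ 2) (r0, 0) :=
    (continuousAt_fst.mul (((hG.mul hs).mul hc).add
      ((continuousAt_fst.mul hc).mul hDD))).add ((hG.pow 2).const_mul M)
  have hN := NN_pos k0 k1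
  filter_upwards [hcont.eventually (lt_mem_nhds (a := 0)
    (by simp [GG_zero, DD]; positivity)), hD.eventually_near] with q h1 h2 h3
  have hne := hD.box.GG_ne h2.1.le h2.2.1.le h3
  rw [kap, div_le_iff₀ (by positivity)]
  linarith

/-- The segment `P1 = α₀`, `P2 = s` with small `s ≠ 0` is covered by points near `(r₀, 0)`
off the axis. -/
lemma exists_param (hD : RData r0 η δ R) {p : ℝ × ℝ → Prop}
    (hp : ∀ᶠ q : ℝ × ℝ in 𝓝 (r0, 0), p q) :
    ∀ᶠ s in 𝓝[≠] (0 : ℝ), ∃ q, p q ∧ q.2 ≠ 0 ∧ Psi q = (PP r0 0, s) := by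
  have hα : |PP r0 0 - PP r0 0| < δ := by simpa using hD.pos
  have hc : ContinuousAt (fun φ => (R (PP r0 0) φ, φ)) 0 :=
    (hD.spec _ 0 hα (by simpa using hD.pos)).2.2.2.continuousAt.prodMk continuousAt_id
  have hev : ∀ᶠ φ in 𝓝 (0 : ℝ), p (R (PP r0 0) φ, φ) := by
    refine hc.tendsto.eventually ?_
    simpa only [hD.R_zero] using hp
  obtain ⟨ε, hε, hball⟩ := Metric.eventually_nhds_iff.1 hev
  have hm : 0 < min ε δ := lt_min hε hD.pos
  set t := min ε δ / 2 with ht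
  have ht0 : 0 < t := by positivity
  have htε : t < ε := by linarith [min_le_left ε δ]
  have htδ : t < δ := by linarith [min_le_right ε δ]
  have hanti := hD.S_strictAntiOn hα
  have hS0 : P2 (R (PP r0 0) 0) 0 = 0 := P2_zero _
  have h1 := hanti (a := 0) (b := t) ⟨by linarith [hD.pos], hD.pos⟩ ⟨by linarith, htδ⟩ ht0
  have h2 := hanti (a := -t) (b := 0) ⟨by linarith, by linarith⟩ ⟨by linarith [hD.pos], hD.pos⟩
    (by linarith)
  simp only [hS0] at h1 h2
  have hcont : ContinuousOn (fun x => P2 (R (PP r0 0) x) x) (Icc (-t) t) := fun x hx =>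
    (hD.S_hasDerivAt hα (abs_lt.2 ⟨by linarith [hx.1], by linarith [hx.2]⟩)
      ).continuousAt.continuousWithinAt
  filter_upwards [nhdsWithin_le_nhds (Ioo_mem_nhds h1 h2), self_mem_nhdsWithin] with s hs hs0
  obtain ⟨φ, hφ, hφs⟩ := intermediate_value_Icc' (by linarith) hcont (Ioo_subset_Icc_self hs)
  simp only at hφs
  have hφt := abs_le.2 hφ
  refine ⟨(R (PP r0 0) φ, φ), hball (by rw [Real.dist_eq, sub_zero]; linarith), ?_, ?_⟩
  · rintro (rfl : φ = 0)
    exact hs0 (by rw [← hφs, hS0]; rfl)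
  · rw [Psi, hφs, (hD.spec _ φ hα (by linarith)).2.2.1]

end RData

lemma cPerp_eq (a : ℝ) : cPerp a = fun s => uu (a * √2, s) := by
  funext s
  have : √2 ≠ 0 := by positivity
  simp only [cPerp, uu, sub_div, add_div, mul_div_cancel_right₀ _ this]

lemma u_eq (p : ℝ × ℝ) : u p.1 p.2 = uu ((p.1 + p.2) / √2, (p.2 - p.1) / √2) := by
  have h2 : √2 * √2 = 2 := Real.mul_self_sqrt (by norm_num)
  have : √2 ≠ 0 := by positivity
  have e1 : ((p.1 + p.2) / √2 - (p.2 - p.1) / √2) / √2 = p.1 := by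
    rw [← sub_div, div_div, h2]; ring
  have e2 : ((p.1 + p.2) / √2 + (p.2 - p.1) / √2) / √2 = p.2 := by
    rw [← add_div, div_div, h2]; ring
  simp only [uu, e1, e2]

/-- The full conclusion at small `s ≠ 0`, for an arbitrary bound `M` on the second derivative. -/
lemma eventually_main {a : ℝ} (ha : a ∈ Ioo (0 : ℝ) 1) (M : ℝ) :
    ∀ᶠ s in 𝓝[≠] (0 : ℝ), DifferentiableAt ℝ uu (a * √2, s) ∧
      DifferentiableAt ℝ (deriv (cPerp a)) s ∧ deriv (deriv (cPerp a)) s ≤ M := by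
  have h2 : 0 < √2 := by positivity
  obtain ⟨r0, hr0, hP, hmax⟩ := exists_r0 (α := a * √2)
    ⟨mul_pos ha.1 h2, by nlinarith [ha.2]⟩
  rw [← hP] at hmax
  obtain ⟨η, δ, R, hD⟩ := exists_RData hr0
  have hlt : PP r0 0 < √2 := by rw [hP]; nlinarith [ha.2]
  filter_upwards [hD.exists_param ((hD.eventually_good hlt hmax).and (hD.eventually_kap_le M))]
    with s ⟨q, ⟨h1, h3⟩, h4, h5⟩
  have hq := h1 h4
  have hd := hq.hasDerivAt_deriv
  have hd0 := hq.uu_hasFDerivAt.differentiableAt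
  rw [h5, hP] at hd hd0
  rw [cPerp_eq]
  exact ⟨hd0, hd.differentiableAt, hd.deriv.trans_le (h3 h4)⟩

lemma tendsto_deriv_deriv {a : ℝ} (ha : a ∈ Ioo (0 : ℝ) 1) :
    Tendsto (fun s => deriv (deriv (cPerp a)) s) (𝓝[≠] (0 : ℝ)) atBot :=
  tendsto_atBot.2 fun M => (eventually_main ha M).mono fun _ h => h.2.2

/-- If the gradient of `u` were differentiable at `(a, a)`, then `c'` would agree off `0` with a
function differentiable at `0`, which is incompatible with `c'' → -∞`. -/
lemma not_differentiableAt_fderiv {a : ℝ} (ha : a ∈ Ioo (0 : ℝ) 1) :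
    ¬ DifferentiableAt ℝ (fderiv ℝ (fun p : ℝ × ℝ => u p.1 p.2)) ((a : ℝ), a) := by
  intro h
  have hs2 : √2 ≠ 0 := by positivity
  set U : ℝ × ℝ → ℝ := fun p => u p.1 p.2 with hU
  have hUe : U = fun p => uu ((p.1 + p.2) / √2, (p.2 - p.1) / √2) := funext u_eq
  have hγ : ∀ s, HasDerivAt (fun s : ℝ => (a - s / √2, a + s / √2)) (-(1 / √2), 1 / √2) s :=
    fun s => (((hasDerivAt_id s).div_const _).const_sub a).prodMk
      (((hasDerivAt_id s).div_const _).const_add a)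
  set w : ℝ → ℝ := fun s => fderiv ℝ U (a - s / √2, a + s / √2) (-(1 / √2), 1 / √2) with hw
  have hwd : DifferentiableAt ℝ w 0 := by
    have h' : DifferentiableAt ℝ (fderiv ℝ U) (a - 0 / √2, a + 0 / √2) := by simpa using h
    have := DifferentiableAt.comp (g := fderiv ℝ U) (f := fun s : ℝ => (a - s / √2, a + s / √2)) 0 h'
      (hγ 0).differentiableAt
    exact this.clm_apply (differentiableAt_const _)
  have hev : ∀ᶠ s in 𝓝[≠] (0 : ℝ), w s = deriv (cPerp a) s := by
    filter_upwards [eventually_main ha 0] with s hs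
    have hUd : DifferentiableAt ℝ U (a - s / √2, a + s / √2) := by
      rw [hUe]
      refine DifferentiableAt.comp (g := uu)
        (f := fun p : ℝ × ℝ => ((p.1 + p.2) / √2, (p.2 - p.1) / √2)) _ ?_ (by fun_prop)
      have e1 : (a - s / √2 + (a + s / √2)) / √2 = a * √2 := by
        rw [div_eq_iff hs2, mul_assoc, Real.mul_self_sqrt (by norm_num)]; ring
      have e2 : (a + s / √2 - (a - s / √2)) / √2 = s := by
        rw [show a + s / √2 - (a - s / √2) = s * 2 / √2 by ring, div_div,
          Real.mul_self_sqrt (by norm_num)]; ring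
      simp only [e1, e2]
      exact hs.1
    have := hUd.hasFDerivAt.comp_hasDerivAt s (f := fun s : ℝ => (a - s / √2, a + s / √2)) (hγ s)
    exact this.deriv.symm
  have hdd : ∀ᶠ s in 𝓝[≠] (0 : ℝ), deriv (deriv (cPerp a)) s = deriv w s := by
    filter_upwards [eventually_eventually_nhdsWithin.2 hev, self_mem_nhdsWithin] with s h1 h2
    rw [isOpen_compl_singleton.nhdsWithin_eq h2] at h1
    exact (EventuallyEq.deriv_eq h1).symm
  have ht : Tendsto (deriv w) (𝓝[>] 0) atBot :=
    ((tendsto_deriv_deriv ha).congr' hdd).mono_left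
      (nhdsWithin_mono _ fun x (hx : 0 < x) => hx.ne')
  exact not_differentiableWithinAt_of_deriv_tendsto_atBot_Ioi w ht hwd.differentiableWithinAt

end AntiDiag

/-- for a diagonal point `x₀ = (a,a)`, the cross-section `c(s) = u(x₀ + s𝟙⊥)`
is twice differentiable for all small `s ≠ 0` and `c″(s) → −∞` as `s → 0`; in particular `u`
is not twice differentiable at `x₀`. -/
theorem stmt16 (a : ℝ) (ha : a ∈ Ioo (0 : ℝ) 1) :
    (∃ ε > (0 : ℝ), ∀ s : ℝ, s ≠ 0 → |s| < ε →
      DifferentiableAt ℝ (cPerp a) s ∧ DifferentiableAt ℝ (deriv (cPerp a)) s) ∧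
    Tendsto (fun s => deriv (deriv (cPerp a)) s) (𝓝[≠] (0 : ℝ)) atBot ∧
    ¬ DifferentiableAt ℝ (fderiv ℝ (fun p : ℝ × ℝ => u p.1 p.2)) ((a : ℝ), a) := by
  refine ⟨?_, AntiDiag.tendsto_deriv_deriv ha, AntiDiag.not_differentiableAt_fderiv ha⟩
  obtain ⟨ε, hε, hball⟩ := Metric.eventually_nhds_iff.1
    (eventually_nhdsWithin_iff.1 (AntiDiag.eventually_main ha 0))
  refine ⟨ε, hε, fun s hs0 hs => ?_⟩
  have hm := hball (y := s) (by rwa [Real.dist_eq, sub_zero]) hs0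
  refine ⟨?_, hm.2.1⟩
  rw [AntiDiag.cPerp_eq]
  exact DifferentiableAt.comp (g := AntiDiag.uu) (f := fun s : ℝ => (a * √2, s)) s hm.1
    (by fun_prop)
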